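/- arXiv:2503.09424 — 8 statements merged into one kernel-verified Lean document; each statement's English description precedes it below -/
import Mathlib

section
/- Under Assumption 3 (i.e., 1 − hγ − h·P_max/(2M·w̄^{3/2}) ≥ 0), the function ℓ is strictly increasing on ℝ. -/
/-!
Write `s = Pmax / (M g μ)`, so that `w̄ = s²`, `w̄^{3/2} = s³`, and put `A = 1 - hγ`, `c = h Pmax / M`.
The two branches of `ell` agree at `w̄` because `h g μ = c / s`, so it suffices to prove strict
monotonicity on each side of `w̄`. On the left `ell` is affine with slope
`A ≥ c / (2 s³) > 0`. On the right, in the variable `a = √w`, it is `A a² + c / a`, and for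
`s ≤ a < b` the increment is `(b - a) (A (a + b) - c / (a b))`, which is positive since
`(a + b) a b > 2 s³`.
-/

/-- The function ℓ from the speed-planning problem: the critical speed is
`w̄ = (Pmax/(M g μ))²` and `ℓ(w) = (1−hγ)w + hgμ` for `w ≤ w̄`,
`ℓ(w) = (1−hγ)w + h·Pmax/(M√w)` for `w > w̄`. -/
noncomputable def ell (h γ g M Pmax μ w : ℝ) : ℝ :=
  if w ≤ (Pmax / (M * g * μ)) ^ 2 then (1 - h * γ) * w + h * g * μ
  else (1 - h * γ) * w + h * Pmax / (M * Real.sqrt w)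

/-- The right-hand branch of `ell` is strictly increasing, in the variable `a = √w ≥ s`. -/
lemma sq_add_div_lt {A c s a b : ℝ} (hc : 0 < c) (hs : 0 < s) (hA : c / (2 * s ^ 3) ≤ A)
    (hsa : s ≤ a) (hab : a < b) : A * a ^ 2 + c / a < A * b ^ 2 + c / b := by
  have ha : 0 < a := hs.trans_le hsa
  have hb : 0 < b := ha.trans hab
  have hcube : 2 * s ^ 3 < (a + b) * (a * b) := by
    have h1 : s ^ 3 ≤ a ^ 3 := by gcongr
    have h2 : 2 * a ^ 3 < (a + b) * (a * b) := by
      have h3 : (a + a) * (a * a) < (a + b) * (a * b) := by gcongr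
      linarith
    linarith
  have hcA : c < A * ((a + b) * (a * b)) := by
    have hA0 : 0 < A := lt_of_lt_of_le (by positivity) hA
    calc c ≤ A * (2 * s ^ 3) := (div_le_iff₀ (by positivity)).1 hA
      _ < _ := by gcongr
  have key : A * b ^ 2 + c / b - (A * a ^ 2 + c / a)
      = (b - a) * (A * ((a + b) * (a * b)) - c) / (a * b) := by
    field_simp
    ring
  have : 0 < (b - a) * (A * ((a + b) * (a * b)) - c) / (a * b) :=
    div_pos (mul_pos (sub_pos.2 hab) (sub_pos.2 hcA)) (by positivity)
  linarith

/-- Under Assumption 3, i.e.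
`1 − hγ − h·Pmax/(2M·w̄^{3/2}) ≥ 0`, the function `ℓ` is strictly increasing on ℝ. -/
theorem ell_strictMono (h γ g M Pmax μ : ℝ)
    (hh : 0 < h) (hg : 0 < g) (hM : 0 < M) (hP : 0 < Pmax) (hμ : 0 < μ) (hγ : 0 ≤ γ)
    (hA3 : 0 ≤ 1 - h * γ - h * Pmax / (2 * M * ((Pmax / (M * g * μ)) ^ 2) ^ ((3:ℝ)/2))) :
    StrictMono (ell h γ g M Pmax μ) := by
  set s := Pmax / (M * g * μ) with hs_def
  have hs : 0 < s := by positivity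
  have hc : 0 < h * Pmax / M := by positivity
  have hpow : (s ^ 2) ^ ((3 : ℝ) / 2) = s ^ 3 := by
    rw [← Real.rpow_natCast s 2, ← Real.rpow_mul hs.le, ← Real.rpow_natCast s 3]
    norm_num
  have hA : h * Pmax / M / (2 * s ^ 3) ≤ 1 - h * γ := by
    rw [hpow] at hA3
    have e : h * Pmax / M / (2 * s ^ 3) = h * Pmax / (2 * M * s ^ 3) := by
      field_simp
    linarith
  have hA0 : 0 < 1 - h * γ := lt_of_lt_of_le (by positivity) hA
  have hglue : h * g * μ = h * Pmax / M / s := by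
    rw [hs_def]
    field_simp
  have hleft : ∀ w ≤ s ^ 2, ell h γ g M Pmax μ w = (1 - h * γ) * w + h * g * μ :=
    fun w hw => if_pos hw
  -- The right-hand formula also holds at the critical speed itself, so both pieces can be closed.
  have hright : ∀ w, s ^ 2 ≤ w →
      ell h γ g M Pmax μ w = (1 - h * γ) * √w ^ 2 + h * Pmax / M / √w := by
    intro w hw
    rw [Real.sq_sqrt ((sq_nonneg s).trans hw)]
    rcases hw.eq_or_lt with rfl | hlt
    · rw [hleft _ le_rfl, Real.sqrt_sq hs.le, hglue]
    · rw [div_div]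
      exact if_neg hlt.not_ge
  refine StrictMonoOn.Iic_union_Ici (a := s ^ 2) ?_ ?_
  · intro x hx y hy hxy
    rw [hleft x hx, hleft y hy]
    gcongr
  · intro x hx y hy hxy
    rw [hright x hx, hright y hy]
    exact sq_add_div_lt hc hs hA (Real.le_sqrt_of_sq_le hx)
      (Real.sqrt_lt_sqrt ((sq_nonneg s).trans hx) hxy)
end

section
/- Fix a ∈ [0, ∞), α ∈ ℝ and v ∈ ℝ, and let T = v + h g(sin α + c). Under Assumption 3: (i) if ℓ(a) ≥ T, then a is the smallest w ≥ a satisfying ℓ(w) ≥ T; (ii) if ℓ(a) < T, then there exists a unique ξ > a with ℓ(ξ) = T, and this ξ is the smallest w ≥ a satisfying ℓ(w) ≥ T; (iii) the map sending v to the smallest w ≥ a with ℓ(w) ≥ v + h g(sin α + c) is nondecreasing in v, and is strictly increasing in v on the set of v with v + h g(sin α + c) > ℓ(a). -/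
/-- Uniform formula for both branches; it uses that the branches agree at the critical speed. -/
lemma ell_eq (h γ g M Pmax μ : ℝ) (hg : 0 < g) (hM : 0 < M) (hP : 0 < Pmax) (hμ : 0 < μ) (w : ℝ) :
    ell h γ g M Pmax μ w =
      (1 - h * γ) * w + h * Pmax / M / max (Real.sqrt w) (Pmax / (M * g * μ)) := by
  have hb : 0 < Pmax / (M * g * μ) := by positivity
  unfold ell
  split_ifs with hw
  · rw [max_eq_right ((Real.sqrt_le_left hb.le).2 hw)]
    field_simp
  · rw [max_eq_left (Real.le_sqrt_of_sq_le (not_le.1 hw).le), div_div]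

/-- The real power in Assumption 3 is `b ^ 3` with `b = Pmax / (M g μ)`. -/
lemma assumption_bounds (h γ g M Pmax μ : ℝ) (hh : 0 < h) (hg : 0 < g) (hM : 0 < M)
    (hP : 0 < Pmax) (hμ : 0 < μ)
    (hA3 : 0 ≤ 1 - h * γ - h * Pmax / (2 * M * ((Pmax / (M * g * μ)) ^ 2) ^ ((3:ℝ)/2))) :
    0 < 1 - h * γ ∧ h * Pmax / M ≤ 2 * (Pmax / (M * g * μ)) ^ 3 * (1 - h * γ) := by
  have hb : 0 < Pmax / (M * g * μ) := by positivity
  generalize Pmax / (M * g * μ) = b at *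
  have e : (b ^ 2) ^ ((3:ℝ)/2) = b ^ 3 := by
    rw [← Real.rpow_natCast, ← Real.rpow_mul hb.le, ← Real.rpow_natCast]
    norm_num
  rw [e] at hA3
  have hpos : 0 < h * Pmax / (2 * M * b ^ 3) := by positivity
  have e2 : h * Pmax / M = 2 * b ^ 3 * (h * Pmax / (2 * M * b ^ 3)) := by field_simp
  refine ⟨by linarith, ?_⟩
  rw [e2]
  exact mul_le_mul_of_nonneg_left (by linarith) (by positivity)

lemma inv_decrease_lt {k D b s t : ℝ} (hk : 0 < k) (hb : 0 < b) (hD : D ≤ 2 * b ^ 3 * k)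
    (hs : b ≤ s) (hst : s < t) : D / s - D / t < k * (t ^ 2 - s ^ 2) := by
  have hs0 : 0 < s := hb.trans_le hs
  have ht0 : 0 < t := hs0.trans hst
  have hcube : 2 * b ^ 3 < (t + s) * (s * t) := by
    have h1 : b ^ 3 ≤ s ^ 3 := by gcongr
    have h2 : s * s < s * t := by gcongr
    nlinarith
  have hlt : D < k * ((t + s) * (s * t)) := by nlinarith
  rw [div_sub_div _ _ hs0.ne' ht0.ne', div_lt_iff₀ (by positivity)]
  nlinarith [mul_lt_mul_of_pos_right hlt (sub_pos.2 hst)]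

lemma strictMono_add_div_max {k D b : ℝ} (hk : 0 < k) (hb : 0 < b)
    (hD : D ≤ 2 * b ^ 3 * k) :
    StrictMono fun w : ℝ => k * w + D / max (Real.sqrt w) b := by
  intro x y hxy
  have hmono : max (√x) b ≤ max (√y) b := max_le_max_right _ (Real.sqrt_le_sqrt hxy.le)
  have hlin : k * x < k * y := by gcongr
  rcases hmono.eq_or_lt with heq | hlt
  · simpa [heq] using hlin
  · have key := inv_decrease_lt hk hb hD (le_max_right _ _) hlt
    -- When the maximum really grows it equals `√y` at `y`, while its square at `x` is at least `x`.
    have hy : b < √y := by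
      by_contra hcon
      rw [max_eq_right (not_lt.1 hcon)] at hlt
      exact absurd (le_max_right _ _) hlt.not_ge
    have hy2 : (max (√y) b) ^ 2 = y := by
      rw [max_eq_left hy.le, Real.sq_sqrt (Real.sqrt_pos.1 (hb.trans hy)).le]
    have hx2 : x ≤ (max (√x) b) ^ 2 :=
      Real.sqrt_le_left (hb.le.trans (le_max_right _ _)) |>.1 (le_max_left _ _)
    have : k * ((max (√y) b) ^ 2 - (max (√x) b) ^ 2) ≤ k * (y - x) := by
      rw [hy2]; gcongr
    simp only
    linarith

/-- fix `a ∈ [0,∞)`, `α`, `v` and let `T = v + h g (sin α + c)`.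
Under Assumption 3:
(i) if `ℓ(a) ≥ T` then `a` is the smallest `w ≥ a` with `ℓ(w) ≥ T`;
(ii) if `ℓ(a) < T` then there is a unique `ξ > a` with `ℓ(ξ) = T`, and this `ξ` is the
smallest `w ≥ a` with `ℓ(w) ≥ T`;
(iii) the map sending `v` to the smallest `w ≥ a` with `ℓ(w) ≥ v + h g (sin α + c)`
is nondecreasing in `v`, and strictly increasing on `{v : v + h g (sin α + c) > ℓ(a)}`. -/
theorem xi_least_props (h γ g M Pmax μ c : ℝ)
    (hh : 0 < h) (hg : 0 < g) (hM : 0 < M) (hP : 0 < Pmax) (hμ : 0 < μ)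
    (hγ : 0 ≤ γ) (hc : 0 ≤ c)
    (hA3 : 0 ≤ 1 - h * γ - h * Pmax / (2 * M * ((Pmax / (M * g * μ)) ^ 2) ^ ((3:ℝ)/2)))
    (a : ℝ) (ha : 0 ≤ a) (α v : ℝ) :
    (v + h * g * (Real.sin α + c) ≤ ell h γ g M Pmax μ a →
      IsLeast {w : ℝ | a ≤ w ∧ v + h * g * (Real.sin α + c) ≤ ell h γ g M Pmax μ w} a) ∧
    (ell h γ g M Pmax μ a < v + h * g * (Real.sin α + c) →
      (∃! ξ : ℝ, a < ξ ∧ ell h γ g M Pmax μ ξ = v + h * g * (Real.sin α + c)) ∧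
      (∀ ξ : ℝ, a < ξ → ell h γ g M Pmax μ ξ = v + h * g * (Real.sin α + c) →
        IsLeast {w : ℝ | a ≤ w ∧ v + h * g * (Real.sin α + c) ≤ ell h γ g M Pmax μ w} ξ)) ∧
    (∀ v₁ v₂ x₁ x₂ : ℝ,
      IsLeast {w : ℝ | a ≤ w ∧ v₁ + h * g * (Real.sin α + c) ≤ ell h γ g M Pmax μ w} x₁ →
      IsLeast {w : ℝ | a ≤ w ∧ v₂ + h * g * (Real.sin α + c) ≤ ell h γ g M Pmax μ w} x₂ →
      (v₁ ≤ v₂ → x₁ ≤ x₂) ∧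
      (v₁ < v₂ → ell h γ g M Pmax μ a < v₁ + h * g * (Real.sin α + c) → x₁ < x₂)) := by
  obtain ⟨hk, hD⟩ := assumption_bounds h γ g M Pmax μ hh hg hM hP hμ hA3
  have hb : 0 < Pmax / (M * g * μ) := by positivity
  have hfun : ell h γ g M Pmax μ = fun w =>
      (1 - h * γ) * w + h * Pmax / M / max (√w) (Pmax / (M * g * μ)) :=
    funext (ell_eq h γ g M Pmax μ hg hM hP hμ)
  have hmono : StrictMono (ell h γ g M Pmax μ) := by
    rw [hfun]; exact strictMono_add_div_max hk hb hD
  have hcont : Continuous (ell h γ g M Pmax μ) := by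
    rw [hfun]
    refine (continuous_const.mul continuous_id).add (continuous_const.div
      (Real.continuous_sqrt.max continuous_const) fun w => ?_)
    exact (hb.trans_le (le_max_right _ _)).ne'
  have hex : ∀ T, ell h γ g M Pmax μ a < T → ∃ ξ, a < ξ ∧ ell h γ g M Pmax μ ξ = T := by
    intro T hT
    -- At any `w ≥ T / k` the bound `ℓ(w) ≥ k w` already gives `ℓ(w) ≥ T`.
    have htop : T ≤ ell h γ g M Pmax μ (max a (T / (1 - h * γ))) := by
      have h1 : T ≤ (1 - h * γ) * max a (T / (1 - h * γ)) := by
        rw [← div_le_iff₀' hk]; exact le_max_right _ _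
      have h2 : 0 ≤ h * Pmax / M /
          max (√(max a (T / (1 - h * γ)))) (Pmax / (M * g * μ)) := by positivity
      rw [ell_eq h γ g M Pmax μ hg hM hP hμ]
      linarith
    obtain ⟨ξ, -, hξ⟩ :=
      intermediate_value_Icc (le_max_left a (T / (1 - h * γ))) hcont.continuousOn ⟨hT.le, htop⟩
    exact ⟨ξ, hmono.lt_iff_lt.1 (hξ ▸ hT), hξ⟩
  refine ⟨fun hT => ⟨⟨le_rfl, hT⟩, fun w hw => hw.1⟩, fun hT => ⟨?_, ?_⟩, ?_⟩
  · obtain ⟨ξ, hξ, hξT⟩ := hex _ hT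
    exact ⟨ξ, ⟨hξ, hξT⟩, fun y hy => hmono.injective (hy.2.trans hξT.symm)⟩
  · intro ξ hξ hξT
    exact ⟨⟨hξ.le, hξT.ge⟩, fun w hw => hmono.le_iff_le.1 (hξT.trans_le hw.2)⟩
  · intro v₁ v₂ x₁ x₂ hx₁ hx₂
    refine ⟨fun hv => hx₁.2 ⟨hx₂.1.1, by linarith [hx₂.1.2]⟩, fun hv hT => ?_⟩
    obtain ⟨ξ, hξ, hξT⟩ := hex _ hT
    -- Minimality of `x₁` gives `ℓ(x₁) ≤ T₁`, and `T₁ < T₂ ≤ ℓ(x₂)`.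
    have hle := hmono.monotone (hx₁.2 ⟨hξ.le, hξT.ge⟩)
    exact hmono.lt_iff_lt.1 (by linarith [hx₂.1.2])
end

section
/- Under Assumption 3, the vector l belongs to X1, and for every w ∈ X1 and every j ∈ {1,…,n}, w_j ≥ l_j. Consequently l_j = min{w_j : w ∈ X1} for every j, i.e., l_j is the smallest possible value of the variable w_j over X1. -/
/-- Membership in the set `X1`: lower limit constraints together with the
maximum-power and maximum-force constraints
`w_{j+1} ≤ ℓ(w_j) − h g (sin α_j + c)` for `j = 1,…,n−1`. -/
def memX1 (n : ℕ) (h γ g M Pmax μ c : ℝ) (α wmin w : ℕ → ℝ) : Prop :=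
  (∀ i, 1 ≤ i → i ≤ n → wmin i ≤ w i) ∧
  (∀ j, 1 ≤ j → j ≤ n - 1 →
    w (j + 1) ≤ ell h γ g M Pmax μ (w j) - h * g * (Real.sin (α j) + c))

/-- under Assumption 3, the vector `l` (defined by the backward recursion
`l_n = w_fin`, `l_j = ξ1(j, l_{j+1})`, where `ξ1(j,v)` is the smallest `w ≥ w^min_j` with
`ℓ(w) ≥ v + h g (sin α_j + c)`) belongs to `X1`, and `l_j ≤ w_j` for every `w ∈ X1`
and every `j ∈ {1,…,n}`: each `l_j` is the minimum of `w_j` over `X1`. -/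
theorem l_isLeast_over_X1 (n : ℕ) (hn : 2 ≤ n)
    (h γ g M Pmax μ c winit wfin : ℝ)
    (hh : 0 < h) (hg : 0 < g) (hM : 0 < M) (hP : 0 < Pmax) (hμ : 0 < μ)
    (hγ : 0 ≤ γ) (hc : 0 ≤ c) (hwinit : 0 ≤ winit) (hwfin : 0 ≤ wfin)
    (hA3 : 0 ≤ 1 - h * γ - h * Pmax / (2 * M * ((Pmax / (M * g * μ)) ^ 2) ^ ((3:ℝ)/2)))
    (α wmin : ℕ → ℝ)
    (hwmin1 : wmin 1 = winit) (hwminn : wmin n = wfin)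
    (hwminmid : ∀ i, 2 ≤ i → i ≤ n - 1 → wmin i = 0)
    (l : ℕ → ℝ) (hln : l n = wfin)
    (hl : ∀ j, 1 ≤ j → j ≤ n - 1 →
      IsLeast {w : ℝ | wmin j ≤ w ∧
        l (j + 1) + h * g * (Real.sin (α j) + c) ≤ ell h γ g M Pmax μ w} (l j)) :
    memX1 n h γ g M Pmax μ c α wmin l ∧
    ∀ w, memX1 n h γ g M Pmax μ c α wmin w → ∀ j, 1 ≤ j → j ≤ n → l j ≤ w j := by
  refine ⟨⟨fun i h1 hi => ?_, fun j h1 hj => ?_⟩, fun w hw j h1 hj => ?_⟩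
  · rcases hi.lt_or_eq with hlt | rfl
    · exact (hl i h1 (by omega)).1.1
    · rw [hwminn, hln]
  · exact le_sub_iff_add_le.mpr (hl j h1 hj).1.2
  · induction hj using Nat.decreasingInduction with
    | self => simpa only [hwminn, hln] using hw.1 n h1 le_rfl
    | of_succ k hk ih =>
      -- By minimality of `l k`, it suffices that `w k` is feasible for the problem defining it.
      refine (hl k h1 (by omega)).2 ⟨hw.1 k h1 hk.le, ?_⟩
      have hstep := hw.2 k h1 (by omega)
      have hnext := ih (by omega)
      linarith
end

section
/- Under Assumption 3, if l_i > w^max_i for some i ∈ {1,…,n}, then X = ∅, i.e., the feasible region of the speed-planning problem is empty. -/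
/-- Membership in the feasible region `X`:
`X = {w ∈ X1 : w_i ≤ w^max_i ∀i, and w_{j+1} ≥ (1−hγ)w_j − h g (sin α_j + c + μ)}`. -/
def memX (n : ℕ) (h γ g M Pmax μ c : ℝ) (α wmin wmax w : ℕ → ℝ) : Prop :=
  memX1 n h γ g M Pmax μ c α wmin w ∧
  (∀ i, 1 ≤ i → i ≤ n → w i ≤ wmax i) ∧
  (∀ j, 1 ≤ j → j ≤ n - 1 →
    (1 - h * γ) * w j - h * g * (Real.sin (α j) + c + μ) ≤ w (j + 1))

/-- under Assumption 3, if `l_i > w^max_i` for some `i ∈ {1,…,n}`,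
then the feasible region `X` of the speed-planning problem is empty. -/
theorem X_empty_of_l_gt_wmax (n : ℕ) (hn : 2 ≤ n)
    (h γ g M Pmax μ c winit wfin : ℝ)
    (hh : 0 < h) (hg : 0 < g) (hM : 0 < M) (hP : 0 < Pmax) (hμ : 0 < μ)
    (hγ : 0 ≤ γ) (hc : 0 ≤ c) (hwinit : 0 ≤ winit) (hwfin : 0 ≤ wfin)
    (hA3 : 0 ≤ 1 - h * γ - h * Pmax / (2 * M * ((Pmax / (M * g * μ)) ^ 2) ^ ((3:ℝ)/2)))
    (α wmin wmax : ℕ → ℝ)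
    (hwmaxpos : ∀ i, 1 ≤ i → i ≤ n → 0 ≤ wmax i)
    (hwmax1 : wmax 1 = winit) (hwmaxn : wmax n = wfin)
    (hwmin1 : wmin 1 = winit) (hwminn : wmin n = wfin)
    (hwminmid : ∀ i, 2 ≤ i → i ≤ n - 1 → wmin i = 0)
    (l : ℕ → ℝ) (hln : l n = wfin)
    (hl : ∀ j, 1 ≤ j → j ≤ n - 1 →
      IsLeast {w : ℝ | wmin j ≤ w ∧
        l (j + 1) + h * g * (Real.sin (α j) + c) ≤ ell h γ g M Pmax μ w} (l j))
    (hviol : ∃ i, 1 ≤ i ∧ i ≤ n ∧ wmax i < l i) :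
    {w : ℕ → ℝ | memX n h γ g M Pmax μ c α wmin wmax w} = ∅ := by
  obtain ⟨i, hi1, hin, hvi⟩ := hviol
  refine Set.eq_empty_iff_forall_notMem.2 ?_
  rintro w ⟨⟨hlow, hstep⟩, hup, -⟩
  -- Backward induction from `n`: every feasible `w` dominates `l` componentwise, since `w j` lies in
  -- the set whose least element is `l j`.
  have key : l i ≤ w i := by
    refine Nat.decreasingInduction' (P := fun j => 1 ≤ j → l j ≤ w j) ?_ hin ?_ hi1
    · intro j hjn _ ih hj1
      have hj : j ≤ n - 1 := by omega
      refine (hl j hj1 hj).2 ⟨hlow j hj1 (by omega), ?_⟩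
      have h1 := ih (by omega)
      have h2 := hstep j hj1 hj
      linarith
    · intro hn1
      have h1 := hlow n hn1 le_rfl
      linarith
  have h3 := hup i hi1 hin
  linarith
end

section
/- Suppose the final boundary condition is dropped: w^min_n = 0 and w^max_n ≥ 0 is an arbitrary given speed bound (so the constraint w_n = w_fin is removed from both (P) and (R)). Under Assumptions 1 and 2, every optimal solution (w*, t*) of the convex relaxation (R) satisfies t*_i = 1/√(w*_i) for all i ∈ {1,…,n−1}; consequently (w*, t*) is feasible, and hence optimal, for the non-convex problem (P), and (P) and (R) have the same optimal value. -/
/-!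
The idea is to show that a relaxation gap `1/√(w_i) < t_i` always leaves room for improvement.
At an optimum such a gap forces `t_i = M f_i/Pmax` (`le_power_of_gap`), hence `f_i > 0` and
`w_i > w̄` (`critical_lt_iff`). The second assumption then propagates the bound to the next node,
`w_{i+1} > w̄` (`critical_lt_next`), and the first one gives `w_{i+1} > (Pmax h/(2MK))^{2/3}` with
`K = λγ Pmax h + 1 - λ`.

Since the final speed is free, `w_{i+1}` may be lowered by a small `δ`, which lowers `t_i` by
`Mδ/(Pmax h)` and does not increase the energy: `f_i` falls by `δ/h` while `f_{i+1}` rises by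
`(1-hγ)δ/h`. The new `t_{i+1}` is `max (1/√(w_{i+1}-δ)) (M f_{i+1}/Pmax)`.

* If the maximum is the first entry, the lower bound on `w_{i+1}` makes the loss in `t_{i+1}`
  strictly smaller than the total gain (`inv_sqrt_sub_lt`), contradicting optimality.
* Otherwise the cost does not increase (it may stay equal, for instance when `γ = 0`), so the
  perturbed point is again optimal, and now has a gap at `i+1`.

Downward induction on `i`, quantified over *all* optimal solutions, excludes the second case.
-/

/-- Discretized force (per unit mass): `f_i(w) = (w_{i+1}−w_i)/h + γ w_i + g(sin α_i + c)`. -/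
noncomputable def fdisc (h γ g c : ℝ) (α w : ℕ → ℝ) (i : ℕ) : ℝ :=
  (w (i + 1) - w i) / h + γ * w i + g * (Real.sin (α i) + c)

/-- Objective: `J(w,t) = Σ_{i=1}^{n−1} h (λM max{η f_i(w), f_i(w)} + t_i)`. -/
noncomputable def J (n : ℕ) (h γ g c lam M η : ℝ) (α w t : ℕ → ℝ) : ℝ :=
  ∑ i ∈ Finset.Icc 1 (n - 1),
    h * (lam * M * max (η * fdisc h γ g c α w i) (fdisc h γ g c α w i) + t i)

/-- Feasibility for the convex relaxation (R): `w` has positive entries,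
`w^min ≤ w ≤ w^max`, `|f_i(w)| ≤ gμ`, `t_i ≥ 1/√(w_i)`, `t_i ≥ M f_i(w)/Pmax`. -/
def FeasR (n : ℕ) (h γ g M Pmax μ c : ℝ) (α wmin wmax w t : ℕ → ℝ) : Prop :=
  (∀ i, 1 ≤ i → i ≤ n → 0 < w i ∧ wmin i ≤ w i ∧ w i ≤ wmax i) ∧
  (∀ i, 1 ≤ i → i ≤ n - 1 →
    |fdisc h γ g c α w i| ≤ g * μ ∧
    1 / Real.sqrt (w i) ≤ t i ∧
    M * fdisc h γ g c α w i / Pmax ≤ t i)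

/-- Feasibility for the non-convex problem (P): as (R) but with `t_i = 1/√(w_i)`. -/
def FeasP (n : ℕ) (h γ g M Pmax μ c : ℝ) (α wmin wmax w t : ℕ → ℝ) : Prop :=
  FeasR n h γ g M Pmax μ c α wmin wmax w t ∧
  (∀ i, 1 ≤ i → i ≤ n - 1 → t i = 1 / Real.sqrt (w i))

/-- `(w, t)` is an optimal solution of the convex relaxation (R). -/
def OptR (n : ℕ) (h γ g M Pmax μ c lam η : ℝ) (α wmin wmax w t : ℕ → ℝ) : Prop :=
  FeasR n h γ g M Pmax μ c α wmin wmax w t ∧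
  ∀ w' t', FeasR n h γ g M Pmax μ c α wmin wmax w' t' →
      J n h γ g c lam M η α w t ≤ J n h γ g c lam M η α w' t'

/-- The speed exceeds the critical speed exactly when the maximal force `g μ` needs more power
than is available. -/
lemma critical_lt_iff {M g μ P w : ℝ} (hM : 0 < M) (hg : 0 < g) (hμ : 0 < μ) (hP : 0 < P)
    (hw : 0 < w) : (P / (M * g * μ)) ^ 2 < w ↔ 1 / Real.sqrt w < M * (g * μ) / P := by
  have hs : 0 < Real.sqrt w := Real.sqrt_pos.2 hw
  have hm : 0 < M * g * μ := by positivity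
  rw [← Real.lt_sqrt (by positivity), div_lt_iff₀ hm, div_lt_div_iff₀ hs hP]
  constructor <;> intro H <;> nlinarith

/-- If the power bound is reached or exceeded at a speed `w₁` above critical, then the next speed
is above critical too; `s` stands for `sin α_i + c` and `W` for the critical speed. -/
lemma critical_lt_next {h γ g M P s W w₁ w₂ : ℝ} (hh : 0 < h) (hγ : 0 ≤ γ) (hM : 0 < M)
    (hP : 0 < P) (hq : 0 < 1 - h * γ) (hw : 0 < w₁)
    (hA2 : 0 ≤ P / M * Real.sqrt ((1 - h * γ) / (W + h * g * s)) -
        γ / (1 - h * γ) * (W + h * g * s) - g * s)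
    (hf : 1 / Real.sqrt w₁ ≤ M * ((w₂ - w₁) / h + γ * w₁ + g * s) / P) (hW : W < w₁) :
    W < w₂ := by
  have hs : 0 < Real.sqrt w₁ := Real.sqrt_pos.2 hw
  have hf' : P / M * (1 / Real.sqrt w₁) ≤ (w₂ - w₁) / h + γ * w₁ + g * s := by
    rw [le_div_iff₀ hP] at hf
    rw [div_mul_eq_mul_div, div_le_iff₀ hM]
    linarith
  have hpm : 0 < P / M := by positivity
  have hd : (w₂ - w₁) / h * h = w₂ - w₁ := by field_simp
  -- The threshold is the speed from which coasting (`f = 0`) leads exactly to `W`.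
  rcases le_or_gt (W + h * g * s) ((1 - h * γ) * w₁) with hu | hu
  · have : 0 < (w₂ - w₁) / h + γ * w₁ + g * s := lt_of_lt_of_le (by positivity) hf'
    nlinarith
  · have hu0 : 0 < W + h * g * s := lt_trans (by positivity) hu
    have h1 : Real.sqrt ((1 - h * γ) / (W + h * g * s)) < 1 / Real.sqrt w₁ := by
      rw [show 1 / Real.sqrt w₁ = Real.sqrt (1 / w₁) by
        rw [Real.sqrt_div zero_le_one, Real.sqrt_one]]
      apply Real.sqrt_lt_sqrt (by positivity)
      rw [div_lt_div_iff₀ hu0 hw]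
      linarith
    have h2 : γ * w₁ ≤ γ / (1 - h * γ) * (W + h * g * s) := by
      rw [div_mul_eq_mul_div, le_div_iff₀ hq, mul_assoc]
      exact mul_le_mul_of_nonneg_left (by linarith) hγ
    have h3 := mul_lt_mul_of_pos_left h1 hpm
    have h4 : 0 < (w₂ - w₁) / h := by linarith
    have h5 := mul_pos h4 hh
    linarith

/-- Tangent estimate for `w ↦ 1/√w`, whose derivative at `B = A^{2/3}` is `-1/(2A)`. -/
lemma inv_sqrt_sub_lt {A w δ : ℝ} (hA : 0 < A) (hδ : 0 < δ) (hw : A ^ ((2:ℝ)/3) < w - δ) :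
    1 / Real.sqrt (w - δ) - 1 / Real.sqrt w < δ / (2 * A) := by
  have hB : 0 < A ^ ((2:ℝ)/3) := Real.rpow_pos_of_pos hA _
  have h0 : 0 < w - δ := hB.trans hw
  set a := Real.sqrt (w - δ) with ha
  set b := Real.sqrt w with hb
  have ha0 : 0 < a := Real.sqrt_pos.2 h0
  have hab : a < b := Real.sqrt_lt_sqrt h0.le (by linarith)
  have ha2 : a ^ 2 = w - δ := Real.sq_sqrt h0.le
  have hb2 : b ^ 2 = w := Real.sq_sqrt (by linarith)
  have hAa : A < a ^ 3 := by
    have h1 : (A ^ ((2:ℝ)/3)) ^ 3 = A ^ 2 := by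
      rw [← Real.rpow_natCast, ← Real.rpow_mul hA.le, ← Real.rpow_natCast]
      norm_num
    have h2 : A ^ 2 < (a ^ 3) ^ 2 := by
      rw [← h1, show (a ^ 3) ^ 2 = (a ^ 2) ^ 3 by ring, ha2]
      exact pow_lt_pow_left₀ hw hB.le (by norm_num)
    exact lt_of_pow_lt_pow_left₀ 2 (by positivity) h2
  have hb0 : 0 < b := ha0.trans hab
  have hδ' : δ = (b - a) * (a + b) := by nlinarith
  have e : 1 / a - 1 / b = δ / (a * b * (a + b)) := by
    rw [hδ']; field_simp
  rw [e]
  apply div_lt_div_of_pos_left hδ (by positivity)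
  have h3 : a * a ≤ a * b := by nlinarith
  have h4 : a * a * (a + a) ≤ a * b * (a + b) := by gcongr
  nlinarith

/-- The energy cost `x ↦ max (η x) x` is 1-Lipschitz to the right. -/
lemma energy_add_le {η x d : ℝ} (hη : η ≤ 1) (hd : 0 ≤ d) :
    max (η * (x + d)) (x + d) ≤ max (η * x) x + d := by
  apply max_le
  · have := le_max_left (η * x) x
    nlinarith
  · have := le_max_right (η * x) x
    linarith

/-- At an optimum, a gap at `i` means that the power constraint is active there. -/
lemma le_power_of_gap {n : ℕ} {h γ g M P μ c lam η : ℝ} {α wmin wmax w t : ℕ → ℝ}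
    (hh : 0 < h) (ho : OptR n h γ g M P μ c lam η α wmin wmax w t)
    {i : ℕ} (hi : 1 ≤ i) (hin : i ≤ n - 1) (hgap : 1 / Real.sqrt (w i) < t i) :
    t i ≤ M * fdisc h γ g c α w i / P := by
  by_contra! hlt
  obtain ⟨⟨hb, hf⟩, hmin⟩ := ho
  set v := max (1 / Real.sqrt (w i)) (M * fdisc h γ g c α w i / P) with hv
  have hvlt : v < t i := max_lt hgap hlt
  have hle : ∀ j, Function.update t i v j ≤ t j := by
    intro j
    by_cases hj : j = i
    · subst hj; simpa using hvlt.le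
    · simp [hj]
  have := hmin w (Function.update t i v) ⟨hb, fun j h1 h2 => ⟨(hf j h1 h2).1, by
    by_cases hj : j = i
    · subst hj; simp [hv]
    · simpa [hj] using (hf j h1 h2).2⟩⟩
  refine absurd this (not_le.2 ?_)
  unfold J
  refine Finset.sum_lt_sum (fun j _ => ?_) ⟨i, Finset.mem_Icc.2 ⟨hi, hin⟩, ?_⟩
  · have := hle j
    gcongr
  · rw [Function.update_self]
    gcongr

/-- A sum changes only through its terms at `i` and, if present, `i + 1`. -/
lemma sum_diff_two {m i : ℕ} (hi : 1 ≤ i) (him : i ≤ m) {G G' : ℕ → ℝ}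
    (hG : ∀ j, j ≠ i → j ≠ i + 1 → G' j = G j) :
    ∑ j ∈ Finset.Icc 1 m, G' j = ∑ j ∈ Finset.Icc 1 m, G j + (G' i - G i) +
      if i + 1 ≤ m then G' (i + 1) - G (i + 1) else 0 := by
  have e : ∀ j, G' j = G j + (if j = i then G' i - G i else 0) +
      (if j = i + 1 then G' (i + 1) - G (i + 1) else 0) := by
    intro j
    by_cases h1 : j = i
    · subst h1; simp
    · by_cases h2 : j = i + 1
      · subst h2; simp
      · simp [h1, h2, hG j h1 h2]
  rw [Finset.sum_congr rfl (fun j _ => e j), Finset.sum_add_distrib, Finset.sum_add_distrib]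
  simp [Finset.sum_ite_eq', hi, him]

set_option maxHeartbeats 1000000 in
/-- One step of the downward induction: if no optimal solution has a gap at `i + 1` (a vacuous
requirement for `i = n - 1`), then none has a gap at `i`. -/
lemma no_gap_step {n : ℕ} {h γ g M P μ c lam η : ℝ} {α wmin wmax : ℕ → ℝ}
    (hh : 0 < h) (hg : 0 < g) (hM : 0 < M) (hP : 0 < P) (hμ : 0 < μ)
    (hγ : 0 ≤ γ) (hc : 0 ≤ c) (hlam : 0 ≤ lam) (hη1 : η ≤ 1)
    (hwminrest : ∀ i, 2 ≤ i → i ≤ n → wmin i = 0)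
    (hA1a : 0 < lam * γ * P * h + 1 - lam)
    (hA1b : (1 - h * γ) * (P / (M * g * μ)) ^ 2 - h * g * (1 + c) >
      (P * h / (2 * M * (lam * γ * P * h + 1 - lam))) ^ ((2:ℝ)/3))
    (hA2 : ∀ i, 1 ≤ i → i ≤ n → (P / (M * g * μ)) ^ 2 < wmax i →
      0 ≤ P / M *
          Real.sqrt ((1 - h * γ) /
            ((P / (M * g * μ)) ^ 2 + h * g * (Real.sin (α i) + c))) -
        γ / (1 - h * γ) * ((P / (M * g * μ)) ^ 2 + h * g * (Real.sin (α i) + c)) -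
        g * (Real.sin (α i) + c))
    {i : ℕ} (hi : 1 ≤ i) (hin : i ≤ n - 1)
    (IH : i + 1 ≤ n - 1 → ∀ w t, OptR n h γ g M P μ c lam η α wmin wmax w t →
      t (i + 1) = 1 / Real.sqrt (w (i + 1)))
    {w t : ℕ → ℝ} (ho : OptR n h γ g M P μ c lam η α wmin wmax w t) :
    t i = 1 / Real.sqrt (w i) := by
  by_contra hne
  obtain ⟨⟨hb, hf⟩, hmin⟩ := id ho
  have hgap : 1 / Real.sqrt (w i) < t i := lt_of_le_of_ne (hf i hi hin).2.1 (Ne.symm hne)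
  have hpow := le_power_of_gap hh ho hi hin hgap
  have hwi := (hb i hi (by omega)).1
  have hwi1 := (hb (i + 1) (by omega) (by omega)).1
  set W := (P / (M * g * μ)) ^ 2 with hWdef
  set K := lam * γ * P * h + 1 - lam with hK
  have hA : 0 < P * h / (2 * M * K) := by positivity
  have hB : 0 < (P * h / (2 * M * K)) ^ ((2:ℝ)/3) := Real.rpow_pos_of_pos hA _
  have hW0 : 0 < W := by positivity
  have hq : 0 < 1 - h * γ := by
    have : 0 < h * g * (1 + c) := by positivity
    by_contra! hcon
    nlinarith
  have hfi0 : 0 < fdisc h γ g c α w i := by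
    have h1 : 0 < M * fdisc h γ g c α w i / P :=
      lt_of_lt_of_le (lt_trans (by positivity) hgap) hpow
    by_contra! hcon
    have : M * fdisc h γ g c α w i / P ≤ 0 :=
      div_nonpos_of_nonpos_of_nonneg (mul_nonpos_of_nonneg_of_nonpos hM.le hcon) hP.le
    linarith
  have hWi : W < w i := by
    rw [critical_lt_iff hM hg hμ hP hwi]
    refine lt_of_lt_of_le (hgap.trans_le hpow) ?_
    have := (abs_le.1 (hf i hi hin).1).2
    gcongr
  have hWi1 : W < w (i + 1) :=
    critical_lt_next (s := Real.sin (α i) + c) hh hγ hM hP hq hwi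
      (hA2 i hi (by omega) (hWi.trans_le (hb i hi (by omega)).2.2))
      (hgap.le.trans hpow) hWi
  have hBi1 : (P * h / (2 * M * K)) ^ ((2:ℝ)/3) < w (i + 1) := by
    have h1 : fdisc h γ g c α w i * h =
        w (i + 1) - (1 - h * γ) * w i + h * g * (Real.sin (α i) + c) := by
      unfold fdisc; field_simp; ring
    have h2 := mul_pos hfi0 hh
    have h3 : h * g * (Real.sin (α i) + c) ≤ h * g * (1 + c) := by
      have := Real.sin_le_one (α i)
      gcongr
    have h4 : (1 - h * γ) * W < (1 - h * γ) * w i := mul_lt_mul_of_pos_left hWi hq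
    linarith
  have hfi1 : i + 1 ≤ n - 1 → fdisc h γ g c α w (i + 1) < g * μ := by
    intro hlt
    have h1 := (hf (i + 1) (by omega) hlt).2.2
    rw [IH hlt w t ho] at h1
    have h2 := h1.trans_lt ((critical_lt_iff hM hg hμ hP hwi1).1 hWi1)
    rw [div_lt_div_iff_of_pos_right hP] at h2
    exact lt_of_mul_lt_mul_left h2 hM.le
  obtain ⟨δ, hδ, hδB, hδt, hδf, hδf1⟩ : ∃ δ : ℝ, 0 < δ ∧
      (P * h / (2 * M * K)) ^ ((2:ℝ)/3) < w (i + 1) - δ ∧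
      1 / Real.sqrt (w i) ≤ t i - M * δ / (P * h) ∧ 0 < fdisc h γ g c α w i - δ / h ∧
      (i + 1 ≤ n - 1 → fdisc h γ g c α w (i + 1) + (1 - h * γ) * δ / h ≤ g * μ) := by
    have T : ∀ {l : ℝ} {F : ℝ → ℝ}, Continuous F → l < F 0 → ∀ᶠ δ in nhdsWithin 0 (Set.Ioi 0),
        l < F δ := fun hF hl =>
      (hF.continuousAt.eventually_const_lt hl).filter_mono nhdsWithin_le_nhds
    have e1 := T (l := (P * h / (2 * M * K)) ^ ((2:ℝ)/3)) (F := fun δ => w (i + 1) - δ)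
      (by fun_prop) (by simpa using hBi1)
    have e2 := T (l := 1 / Real.sqrt (w i)) (F := fun δ => t i - M * δ / (P * h))
      (by fun_prop) (by simpa using hgap)
    have e3 := T (l := 0) (F := fun δ => fdisc h γ g c α w i - δ / h)
      (by fun_prop) (by simpa using hfi0)
    have e4 : ∀ᶠ δ in nhdsWithin 0 (Set.Ioi 0), i + 1 ≤ n - 1 →
        0 < g * μ - (fdisc h γ g c α w (i + 1) + (1 - h * γ) * δ / h) := by
      by_cases hlt : i + 1 ≤ n - 1
      · filter_upwards [T (l := 0) (F := fun δ => g * μ - (fdisc h γ g c α w (i + 1) +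
          (1 - h * γ) * δ / h)) (by fun_prop) (by simpa using hfi1 hlt)] with δ hd _ using hd
      · exact Filter.Eventually.of_forall fun _ hc => absurd hc hlt
    obtain ⟨δ, h0, h1, h2, h3, h4⟩ :=
      (eventually_mem_nhdsWithin.and (e1.and (e2.and (e3.and e4)))).exists
    exact ⟨δ, h0, h1, h2.le, h3, fun hlt => by linarith [h4 hlt]⟩
  have hδw : 0 < w (i + 1) - δ := hB.trans hδB
  -- The perturbed point: `w_{i+1}` lowered by `δ`, with `t_i` and `t_{i+1}` adapted.
  set w' := Function.update w (i + 1) (w (i + 1) - δ) with hw'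
  have w'1 : w' (i + 1) = w (i + 1) - δ := by simp [hw']
  have w'o : ∀ j, j ≠ i + 1 → w' j = w j := fun j hj => by simp [hw', hj]
  have f'i : fdisc h γ g c α w' i = fdisc h γ g c α w i - δ / h := by
    unfold fdisc; rw [w'1, w'o i (by omega)]; ring
  have f'i1 : fdisc h γ g c α w' (i + 1) =
      fdisc h γ g c α w (i + 1) + (1 - h * γ) * δ / h := by
    unfold fdisc; rw [w'1, w'o (i + 1 + 1) (by omega)]; field_simp; ring
  have f'o : ∀ j, j ≠ i → j ≠ i + 1 → fdisc h γ g c α w' j = fdisc h γ g c α w j := by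
    intro j h1 h2
    unfold fdisc; rw [w'o j h2, w'o (j + 1) (by omega)]
  set v := max (1 / Real.sqrt (w' (i + 1))) (M * fdisc h γ g c α w' (i + 1) / P) with hv
  set t' := Function.update (Function.update t i (t i - M * δ / (P * h))) (i + 1) v with ht'
  have t'1 : t' (i + 1) = v := by simp [ht']
  have t'i : t' i = t i - M * δ / (P * h) := by simp [ht']
  have t'o : ∀ j, j ≠ i → j ≠ i + 1 → t' j = t j := fun j h1 h2 => by simp [ht', h1, h2]
  have hqd : 0 ≤ (1 - h * γ) * δ / h := by positivity
  have hfeas' : FeasR n h γ g M P μ c α wmin wmax w' t' := by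
    refine ⟨fun j h1 h2 => ?_, fun j h1 h2 => ?_⟩
    · by_cases hj : j = i + 1
      · subst hj
        rw [w'1, hwminrest (i + 1) (by omega) h2]
        exact ⟨hδw, hδw.le, by linarith [(hb (i + 1) h1 h2).2.2]⟩
      · rw [w'o j hj]; exact hb j h1 h2
    · by_cases hj : j = i + 1
      · subst hj
        rw [t'1]
        refine ⟨?_, le_max_left _ _, le_max_right _ _⟩
        rw [f'i1, abs_le]
        exact ⟨by linarith [(abs_le.1 (hf (i + 1) h1 h2).1).1], hδf1 h2⟩
      · by_cases hj' : j = i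
        · subst hj'
          rw [t'i, f'i, w'o j hj]
          refine ⟨?_, hδt, ?_⟩
          · have : 0 < δ / h := by positivity
            rw [abs_of_pos hδf]
            linarith [(abs_le.1 (hf j h1 h2).1).2]
          · have e : M * (fdisc h γ g c α w j - δ / h) / P =
                M * fdisc h γ g c α w j / P - M * δ / (P * h) := by field_simp
            linarith [(hf j h1 h2).2.2]
        · rw [t'o j hj' hj, f'o j hj' hj, w'o j hj]
          exact hf j h1 h2
  have hsum : J n h γ g c lam M η α w' t' = J n h γ g c lam M η α w t + _ + _ :=
    sum_diff_two (m := n - 1) hi hin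
      (G := fun j => h * (lam * M * max (η * fdisc h γ g c α w j) (fdisc h γ g c α w j) + t j))
      (G' := fun j =>
        h * (lam * M * max (η * fdisc h γ g c α w' j) (fdisc h γ g c α w' j) + t' j))
      (fun j h1 h2 => by simp only [f'o j h1 h2, t'o j h1 h2])
  have hlM : 0 ≤ lam * M := by positivity
  have emax : ∀ x : ℝ, 0 < x → max (η * x) x = x := fun x hx => max_eq_right (by nlinarith)
  have hJ := hmin w' t' hfeas'
  simp only [t'1, t'i] at hsum
  rw [f'i, emax _ hδf, emax _ hfi0] at hsum
  have hgain : 0 < M * δ / (P * h) := by positivity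
  by_cases hlt : i + 1 ≤ n - 1
  · rw [if_pos hlt] at hsum
    have hE := energy_add_le (x := fdisc h γ g c α w (i + 1)) hη1 hqd
    rw [← f'i1] at hE
    have hE' := mul_le_mul_of_nonneg_left hE hlM
    set E := max (η * fdisc h γ g c α w (i + 1)) (fdisc h γ g c α w (i + 1))
    set E' := max (η * fdisc h γ g c α w' (i + 1)) (fdisc h γ g c α w' (i + 1))
    have hqdd : (1 - h * γ) * δ / h = δ / h - γ * δ := by field_simp
    have ht1 := IH hlt w t ho
    -- `J` changes by `h * Δ` with `Δ ≤ -λMγδ - Mδ/(Ph) + (v - t_{i+1})`.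
    have hJ' : J n h γ g c lam M η α w' t' ≤ J n h γ g c lam M η α w t +
        h * (v - t (i + 1) - M * δ / (P * h) - lam * M * (γ * δ)) := by
      rw [hsum]
      rw [hqdd] at hE'
      linarith [mul_le_mul_of_nonneg_left hE' hh.le]
    rcases le_or_gt (M * fdisc h γ g c α w' (i + 1) / P) (1 / Real.sqrt (w' (i + 1))) with hc1 | hc1
    · have hv1 : v = 1 / Real.sqrt (w (i + 1) - δ) := by rw [hv, max_eq_left hc1, w'1]
      have hest := inv_sqrt_sub_lt hA hδ hδB
      have e : δ / (2 * (P * h / (2 * M * K))) =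
          M * δ / (P * h) + lam * M * (γ * δ) - lam * (M * δ / (P * h)) := by
        rw [hK] at hA1a ⊢
        field_simp
        ring
      rw [e, ← hv1, ← ht1] at hest
      have h5 : 0 ≤ lam * (M * δ / (P * h)) := by positivity
      have h6 : h * (v - t (i + 1) - M * δ / (P * h) - lam * M * (γ * δ)) < 0 :=
        mul_neg_of_pos_of_neg hh (by linarith)
      linarith
    · have hv2 : v = M * fdisc h γ g c α w' (i + 1) / P := by rw [hv, max_eq_right hc1.le]
      have hvt : v ≤ t (i + 1) + M * δ / (P * h) := by
        have e : M * fdisc h γ g c α w' (i + 1) / P =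
            M * fdisc h γ g c α w (i + 1) / P + M * δ / (P * h) - M * γ * δ / P := by
          rw [f'i1]; field_simp; ring
        have : 0 ≤ M * γ * δ / P := by positivity
        linarith [(hf (i + 1) (by omega) hlt).2.2]
      have h6 : h * (v - t (i + 1) - M * δ / (P * h) - lam * M * (γ * δ)) ≤ 0 := by
        have : 0 ≤ lam * M * (γ * δ) := by positivity
        exact mul_nonpos_of_nonneg_of_nonpos hh.le (by linarith)
      -- The perturbed point is optimal as well, and has a gap at `i + 1`.
      have ho' : OptR n h γ g M P μ c lam η α wmin wmax w' t' :=
        ⟨hfeas', fun w'' t'' hf'' => by linarith [hmin w'' t'' hf'']⟩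
      have := IH hlt w' t' ho'
      rw [t'1, hv2] at this
      linarith
  · rw [if_neg hlt] at hsum
    have h1 : 0 ≤ lam * M * (δ / h) := by positivity
    have h2 : h * (lam * M * (fdisc h γ g c α w i - δ / h) + (t i - M * δ / (P * h))) -
        h * (lam * M * fdisc h γ g c α w i + t i) =
        h * (-(lam * M * (δ / h)) - M * δ / (P * h)) := by ring
    have h3 : h * (-(lam * M * (δ / h)) - M * δ / (P * h)) < 0 :=
      mul_neg_of_pos_of_neg hh (by linarith)
    linarith

/-- with the final boundary condition dropped (`w^min_n = 0`, `w^max_n`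
an arbitrary nonnegative bound), under Assumptions 1 and 2 every optimal solution
`(w*,t*)` of (R) satisfies `t*_i = 1/√(w*_i)` for all `i ∈ {1,…,n−1}`; hence it is
feasible and optimal for (P), and (P) and (R) have the same optimal value. -/
theorem relaxation_exact_no_final_condition (n : ℕ) (hn : 2 ≤ n)
    (h γ g M Pmax μ c lam η winit : ℝ)
    (hh : 0 < h) (hg : 0 < g) (hM : 0 < M) (hP : 0 < Pmax) (hμ : 0 < μ)
    (hγ : 0 ≤ γ) (hc : 0 ≤ c) (hlam : 0 ≤ lam) (hη0 : 0 ≤ η) (hη1 : η ≤ 1)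
    (hwinit : 0 ≤ winit)
    (α wmin wmax : ℕ → ℝ)
    (hwmaxpos : ∀ i, 1 ≤ i → i ≤ n → 0 ≤ wmax i) (hwmax1 : wmax 1 = winit)
    (hwmin1 : wmin 1 = winit) (hwminrest : ∀ i, 2 ≤ i → i ≤ n → wmin i = 0)
    -- Assumption 1
    (hA1a : 0 < lam * γ * Pmax * h + 1 - lam)
    (hA1b : (1 - h * γ) * (Pmax / (M * g * μ)) ^ 2 - h * g * (1 + c) >
      (Pmax * h / (2 * M * (lam * γ * Pmax * h + 1 - lam))) ^ ((2:ℝ)/3))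
    -- Assumption 2
    (hA2 : ∀ i, 1 ≤ i → i ≤ n → (Pmax / (M * g * μ)) ^ 2 < wmax i →
      0 ≤ Pmax / M *
          Real.sqrt ((1 - h * γ) /
            ((Pmax / (M * g * μ)) ^ 2 + h * g * (Real.sin (α i) + c))) -
        γ / (1 - h * γ) * ((Pmax / (M * g * μ)) ^ 2 + h * g * (Real.sin (α i) + c)) -
        g * (Real.sin (α i) + c))
    (w t : ℕ → ℝ)
    (hfeas : FeasR n h γ g M Pmax μ c α wmin wmax w t)
    (hopt : ∀ w' t', FeasR n h γ g M Pmax μ c α wmin wmax w' t' →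
      J n h γ g c lam M η α w t ≤ J n h γ g c lam M η α w' t') :
    (∀ i, 1 ≤ i → i ≤ n - 1 → t i = 1 / Real.sqrt (w i)) ∧
    FeasP n h γ g M Pmax μ c α wmin wmax w t ∧
    (∀ w' t', FeasP n h γ g M Pmax μ c α wmin wmax w' t' →
      J n h γ g c lam M η α w t ≤ J n h γ g c lam M η α w' t') := by
  have key : ∀ k i, i + k = n - 1 → 1 ≤ i → ∀ w t,
      OptR n h γ g M Pmax μ c lam η α wmin wmax w t → t i = 1 / Real.sqrt (w i) := by
    intro k
    induction k with
    | zero =>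
      intro i hik hi w t ho
      exact no_gap_step hh hg hM hP hμ hγ hc hlam hη1 hwminrest hA1a hA1b hA2 hi (by omega)
        (fun hlt => by omega) ho
    | succ k ih =>
      intro i hik hi w t ho
      exact no_gap_step hh hg hM hP hμ hγ hc hlam hη1 hwminrest hA1a hA1b hA2 hi (by omega)
        (fun _ => ih (i + 1) (by omega) (by omega)) ho
  have hex : ∀ i, 1 ≤ i → i ≤ n - 1 → t i = 1 / Real.sqrt (w i) := fun i hi hin =>
    key (n - 1 - i) i (by omega) hi w t ⟨hfeas, hopt⟩
  exact ⟨hex, ⟨hfeas, hex⟩, fun w' t' hf => hopt w' t' hf.1⟩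
end

section
/- Assume Assumptions 1, 2 and 3 hold and that l_i ≤ w^max_i for all i. Then every optimal solution (w*, t*) of the strengthened convex relaxation (R') — problem (R) with the additional constraints w_i ≥ l_i for i = 1,…,n — satisfies t*_i = 1/√(w*_i) for all i ∈ {1,…,n−1}. Consequently (w*, t*) is feasible and optimal for the non-convex problem (P), and (P) and (R') have the same optimal value and the same optimal solutions. -/
/-- Feasibility for the strengthened relaxation (R′): (R) plus `w_i ≥ l_i`. -/
def FeasR' (n : ℕ) (h γ g M Pmax μ c : ℝ) (α wmin wmax l w t : ℕ → ℝ) : Prop :=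
  FeasR n h γ g M Pmax μ c α wmin wmax w t ∧ (∀ i, 1 ≤ i → i ≤ n → l i ≤ w i)

/-! ### Monotonicity of `ℓ` and the critical speed -/

/-- Strict Lipschitz bound for `1/√x` on `[s², ∞)`, with the constant `1/(2s³)`. -/
lemma inv_sqrt_sub_lt_s7 {s x y : ℝ} (hs : 0 < s) (hx : s ^ 2 ≤ x) (hxy : x < y) :
    1 / √x - 1 / √y < (y - x) / (2 * s ^ 3) := by
  have hx0 : 0 < x := lt_of_lt_of_le (by positivity) hx
  have hy0 : 0 < y := hx0.trans hxy
  have hp : s ≤ √x := Real.le_sqrt_of_sq_le hx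
  have hpq : √x < √y := Real.sqrt_lt_sqrt hx0.le hxy
  have ex : x = √x ^ 2 := (Real.sq_sqrt hx0.le).symm
  have ey : y = √y ^ 2 := (Real.sq_sqrt hy0.le).symm
  set p := √x
  set q := √y
  have hp0 : 0 < p := hs.trans_le hp
  have hq0 : 0 < q := hp0.trans hpq
  rw [ex, ey, div_sub_div _ _ hp0.ne' hq0.ne', div_lt_div_iff₀ (by positivity) (by positivity)]
  have h1 : s ^ 2 ≤ p * q := by nlinarith
  have h2 : 2 * s < p + q := by linarith
  have h3 : 2 * s ^ 3 < (p + q) * (p * q) := by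
    have e1 : s ^ 2 * (2 * s) < s ^ 2 * (p + q) := by gcongr
    have e2 : s ^ 2 * (p + q) ≤ p * q * (p + q) := by gcongr
    nlinarith
  nlinarith [mul_lt_mul_of_pos_left h3 (sub_pos.2 hpq)]

lemma inv_sqrt_sub_le {s x y : ℝ} (hs : 0 < s) (hx : s ^ 2 ≤ x) (hxy : x ≤ y) :
    1 / √x - 1 / √y ≤ (y - x) / (2 * s ^ 3) := by
  rcases hxy.eq_or_lt with rfl | hlt
  · simp
  · exact (inv_sqrt_sub_lt_s7 hs hx hlt).le

/-- Assumption 3 rewritten without real powers. -/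
lemma assumption_three_cube {h γ g M Pmax μ : ℝ} (hg : 0 < g) (hM : 0 < M) (hP : 0 < Pmax)
    (hμ : 0 < μ)
    (hA3 : 0 ≤ 1 - h * γ - h * Pmax / (2 * M * ((Pmax / (M * g * μ)) ^ 2) ^ ((3:ℝ)/2))) :
    h * Pmax / (M * (2 * (Pmax / (M * g * μ)) ^ 3)) ≤ 1 - h * γ := by
  have hs : 0 < Pmax / (M * g * μ) := by positivity
  have e : ((Pmax / (M * g * μ)) ^ 2) ^ ((3:ℝ)/2) = (Pmax / (M * g * μ)) ^ 3 := by
    rw [← Real.rpow_natCast, ← Real.rpow_mul hs.le, ← Real.rpow_natCast]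
    norm_num
  rw [e] at hA3
  have e2 : M * (2 * (Pmax / (M * g * μ)) ^ 3) = 2 * M * (Pmax / (M * g * μ)) ^ 3 := by ring
  rw [e2]
  linarith

section Profile

variable {h γ g M Pmax μ : ℝ}

/-- The loss in the power term of `ℓ` between two supercritical speeds is paid for by the linear
term. -/
lemma power_drop_le (hh : 0 < h) (hg : 0 < g) (hM : 0 < M) (hP : 0 < Pmax) (hμ : 0 < μ)
    (hA : h * Pmax / (M * (2 * (Pmax / (M * g * μ)) ^ 3)) ≤ 1 - h * γ) {x y : ℝ}
    (hx : (Pmax / (M * g * μ)) ^ 2 ≤ x) (hxy : x ≤ y) :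
    h * Pmax / M * (1 / √x - 1 / √y) ≤ (1 - h * γ) * (y - x) := by
  have hs : 0 < Pmax / (M * g * μ) := by positivity
  calc h * Pmax / M * (1 / √x - 1 / √y)
      ≤ h * Pmax / M * ((y - x) / (2 * (Pmax / (M * g * μ)) ^ 3)) :=
        mul_le_mul_of_nonneg_left (inv_sqrt_sub_le hs hx hxy) (by positivity)
    _ = h * Pmax / (M * (2 * (Pmax / (M * g * μ)) ^ 3)) * (y - x) := by
        field_simp
    _ ≤ _ := mul_le_mul_of_nonneg_right hA (by linarith)

lemma power_drop_lt (hh : 0 < h) (hg : 0 < g) (hM : 0 < M) (hP : 0 < Pmax) (hμ : 0 < μ)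
    (hA : h * Pmax / (M * (2 * (Pmax / (M * g * μ)) ^ 3)) ≤ 1 - h * γ) {x y : ℝ}
    (hx : (Pmax / (M * g * μ)) ^ 2 ≤ x) (hxy : x < y) :
    h * Pmax / M * (1 / √x - 1 / √y) < (1 - h * γ) * (y - x) := by
  have hs : 0 < Pmax / (M * g * μ) := by positivity
  calc h * Pmax / M * (1 / √x - 1 / √y)
      < h * Pmax / M * ((y - x) / (2 * (Pmax / (M * g * μ)) ^ 3)) :=
        mul_lt_mul_of_pos_left (inv_sqrt_sub_lt_s7 hs hx hxy) (by positivity)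
    _ = h * Pmax / (M * (2 * (Pmax / (M * g * μ)) ^ 3)) * (y - x) := by
        field_simp
    _ ≤ _ := mul_le_mul_of_nonneg_right hA (by linarith)

/-- On `[w̄, ∞)`, endpoint included, `ℓ` is given by its power branch. -/
lemma ell_of_ge (hg : 0 < g) (hM : 0 < M) (hP : 0 < Pmax) (hμ : 0 < μ) {x : ℝ}
    (hx : (Pmax / (M * g * μ)) ^ 2 ≤ x) :
    ell h γ g M Pmax μ x = (1 - h * γ) * x + h * Pmax / M * (1 / √x) := by
  have hs : 0 < Pmax / (M * g * μ) := by positivity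
  unfold ell
  split_ifs with hc
  · have : x = (Pmax / (M * g * μ)) ^ 2 := le_antisymm hc hx
    subst this
    rw [Real.sqrt_sq hs.le]
    field_simp
  · rw [div_mul_div_comm, mul_one]

/-- At or above the critical speed the power bound implies the traction bound. -/
lemma power_le_traction (hg : 0 < g) (hM : 0 < M) (hP : 0 < Pmax) (hμ : 0 < μ) {x : ℝ}
    (hx : (Pmax / (M * g * μ)) ^ 2 ≤ x) : Pmax / M * (1 / √x) ≤ g * μ := by
  have hs : 0 < Pmax / (M * g * μ) := by positivity
  have hp : Pmax / (M * g * μ) ≤ √x := Real.le_sqrt_of_sq_le hx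
  have h0 : 0 < √x := hs.trans_le hp
  rw [div_le_iff₀ (by positivity)] at hp
  rw [div_mul_div_comm, mul_one, div_le_iff₀ (by positivity)]
  linarith

lemma ell_mono (hh : 0 < h) (hg : 0 < g) (hM : 0 < M) (hP : 0 < Pmax) (hμ : 0 < μ)
    (hA : h * Pmax / (M * (2 * (Pmax / (M * g * μ)) ^ 3)) ≤ 1 - h * γ) {x y : ℝ} (hxy : x ≤ y) :
    ell h γ g M Pmax μ x ≤ ell h γ g M Pmax μ y := by
  have hs : 0 < Pmax / (M * g * μ) := by positivity
  have ha : 0 ≤ 1 - h * γ := le_trans (by positivity) hA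
  have low : ∀ u v : ℝ, u ≤ v → v ≤ (Pmax / (M * g * μ)) ^ 2 →
      ell h γ g M Pmax μ u ≤ ell h γ g M Pmax μ v := by
    intro u v huv hv
    unfold ell
    rw [if_pos (huv.trans hv), if_pos hv]
    have := mul_le_mul_of_nonneg_left huv ha
    linarith
  have high : ∀ u v : ℝ, u ≤ v → (Pmax / (M * g * μ)) ^ 2 ≤ u →
      ell h γ g M Pmax μ u ≤ ell h γ g M Pmax μ v := by
    intro u v huv hu
    rw [ell_of_ge hg hM hP hμ hu, ell_of_ge hg hM hP hμ (hu.trans huv)]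
    have := power_drop_le hh hg hM hP hμ hA hu huv
    linarith
  rcases le_total y ((Pmax / (M * g * μ)) ^ 2) with hy | hy
  · exact low x y hxy hy
  · rcases le_total x ((Pmax / (M * g * μ)) ^ 2) with hx | hx
    · exact (low x _ hx le_rfl).trans (high _ y hy le_rfl)
    · exact high x y hxy hx

/-- The traction bound gives `v ≤ ℓ(x)` below the critical speed, where `ℓ` is the linear branch. -/
lemma le_ell_of_force_le {G x y : ℝ} (hh : 0 < h)
    (hf : (y - x) / h + γ * x + G ≤ g * μ) (hx : x ≤ (Pmax / (M * g * μ)) ^ 2) :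
    y + h * G ≤ ell h γ g M Pmax μ x := by
  unfold ell
  rw [if_pos hx]
  have h1 : h * ((y - x) / h + γ * x + G) ≤ h * (g * μ) := mul_le_mul_of_nonneg_left hf hh.le
  have h2 : h * ((y - x) / h + γ * x + G) = y - x + h * γ * x + h * G := by field_simp
  linarith

/-- Under the inequality of Assumption 2, full power from a speed at or above `w̄` never brings the
speed below `w̄`. The pivot is `v = (w̄ + hG)/a`, the speed from which coasting leads to `w̄`: above
`v` coasting suffices, and below `v` full power does not decelerate. -/
lemma critical_le_ell_sub {G x : ℝ} (hh : 0 < h) (hg : 0 < g) (hM : 0 < M) (hP : 0 < Pmax)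
    (hμ : 0 < μ) (hγ : 0 ≤ γ) (ha : 0 < 1 - h * γ)
    (hA2 : 0 ≤ Pmax / M * √((1 - h * γ) / ((Pmax / (M * g * μ)) ^ 2 + h * G)) -
      γ / (1 - h * γ) * ((Pmax / (M * g * μ)) ^ 2 + h * G) - G)
    (hx : (Pmax / (M * g * μ)) ^ 2 ≤ x) :
    (Pmax / (M * g * μ)) ^ 2 ≤ ell h γ g M Pmax μ x - h * G := by
  have hs : 0 < Pmax / (M * g * μ) := by positivity
  rw [ell_of_ge hg hM hP hμ hx]
  set W := (Pmax / (M * g * μ)) ^ 2 with hW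
  have hW0 : 0 < W := by positivity
  have hx0 : 0 < x := hW0.trans_le hx
  have hsx : 0 < √x := Real.sqrt_pos.2 hx0
  have hpos : 0 < h * Pmax / M * (1 / √x) := by positivity
  by_cases hv : W + h * G ≤ (1 - h * γ) * x
  · linarith
  · push Not at hv
    have hB : 0 < W + h * G := lt_trans (by positivity) hv
    have hxle : x ≤ (W + h * G) / (1 - h * γ) := by
      rw [le_div_iff₀ ha]; linarith
    have h1 : √((1 - h * γ) / (W + h * G)) ≤ 1 / √x := by
      have : (1 - h * γ) / (W + h * G) ≤ 1 / x := by
        rw [div_le_div_iff₀ hB hx0]; linarith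
      calc √((1 - h * γ) / (W + h * G)) ≤ √(1 / x) := Real.sqrt_le_sqrt this
        _ = 1 / √x := by rw [Real.sqrt_div zero_le_one, Real.sqrt_one]
    have h2 : Pmax / M * √((1 - h * γ) / (W + h * G)) ≤ Pmax / M * (1 / √x) :=
      mul_le_mul_of_nonneg_left h1 (by positivity)
    have h3 : γ * x ≤ γ / (1 - h * γ) * (W + h * G) := by
      calc γ * x ≤ γ * ((W + h * G) / (1 - h * γ)) := mul_le_mul_of_nonneg_left hxle hγ
        _ = _ := by ring
    have h4 : 0 ≤ h * (Pmax / M * (1 / √x) - γ * x - G) :=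
      mul_nonneg hh.le (by linarith)
    have h5 : h * Pmax / M * (1 / √x) = h * (Pmax / M * (1 / √x)) := by ring
    linarith

/-! ### Cost comparison on one stage -/

/-- The amount by which the cost of one stage, from speed `x` to `y` with time `t`, exceeds the cost of
the stage from `x'` to `y'` with time `1/√x'`, minus the telescoping bound
`(λM + M/P_max)((y - y') - (1 - hγ)(x - x'))`. -/
noncomputable def stageGap (h γ M Pmax lam η G x y t x' y' : ℝ) : ℝ :=
  h * (lam * M * max (η * ((y - x) / h + γ * x + G)) ((y - x) / h + γ * x + G) + t) -
    h * (lam * M * max (η * ((y' - x') / h + γ * x' + G)) ((y' - x') / h + γ * x' + G) + 1 / √x') -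
    (lam * M + M / Pmax) * ((y - y') - (1 - h * γ) * (x - x'))

/-- `z ↦ max (ηz) z` drops by at least `f - f'` when the force goes from `f` to `f'`, provided `f'` is
nonnegative or `f ≤ f'`. -/
lemma max_sub_max_ge {η f f' : ℝ} (hη1 : η ≤ 1) (hf : 0 ≤ f' ∨ f ≤ f') :
    f - f' ≤ max (η * f) f - max (η * f') f' := by
  have key : max (η * f') f' ≤ max (η * f) f + (f' - f) := by
    refine max_le ?_ ?_
    · rcases hf with h1 | h1
      · have : f ≤ max (η * f) f := le_max_right _ _
        nlinarith
      · have : η * f ≤ max (η * f) f := le_max_left _ _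
        nlinarith
    · have : f ≤ max (η * f) f := le_max_right _ _
      linarith
  linarith

/-- The gap splits into a braking/traction part and a time part. -/
lemma stageGap_ge {lam η G x y t x' y' : ℝ} (hh : 0 < h) (hM : 0 < M) (hlam : 0 ≤ lam)
    (hη1 : η ≤ 1)
    (hf : 0 ≤ (y' - x') / h + γ * x' + G ∨
      (y - x) / h + γ * x + G ≤ (y' - x') / h + γ * x' + G) :
    h * (t - 1 / √x') - M / Pmax * ((y - y') - (1 - h * γ) * (x - x')) ≤
      stageGap h γ M Pmax lam η G x y t x' y' := by
  have h1 := mul_le_mul_of_nonneg_left (max_sub_max_ge hη1 hf)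
    (show 0 ≤ h * (lam * M) by positivity)
  have h2 : h * (lam * M) * ((y - x) / h + γ * x + G - ((y' - x') / h + γ * x' + G)) =
      lam * M * ((y - y') - (1 - h * γ) * (x - x')) := by
    field_simp
    ring
  unfold stageGap
  linarith

/-- A stage whose end speed is truncated to `ℓ(x') - hG` from a supercritical `x'`: the power bound is
active there, so the time saved is proportional to the force saved. -/
lemma stageGap_nonneg_of_cut {lam η G x y t x' y' : ℝ} (hh : 0 < h) (hg : 0 < g) (hM : 0 < M)
    (hP : 0 < Pmax) (hμ : 0 < μ) (hlam : 0 ≤ lam) (hη1 : η ≤ 1)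
    (ht : M * ((y - x) / h + γ * x + G) / Pmax ≤ t)
    (hx' : (Pmax / (M * g * μ)) ^ 2 ≤ x') (hy' : y' = ell h γ g M Pmax μ x' - h * G) :
    0 ≤ stageGap h γ M Pmax lam η G x y t x' y' := by
  rw [ell_of_ge hg hM hP hμ hx'] at hy'
  have hf' : (y' - x') / h + γ * x' + G = Pmax / M * (1 / √x') := by
    rw [hy']; field_simp; ring
  refine le_trans ?_ (stageGap_ge (Pmax := Pmax) hh hM hlam hη1 (Or.inl ?_))
  · have h1 := mul_le_mul_of_nonneg_left ht hh.le
    have h2 : h * (1 / √x') = h * (M / Pmax * ((y' - x') / h + γ * x' + G)) := by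
      rw [hf']; field_simp
    have h3 : h * (M * ((y - x) / h + γ * x + G) / Pmax) -
        h * (M / Pmax * ((y' - x') / h + γ * x' + G)) =
        M / Pmax * ((y - y') - (1 - h * γ) * (x - x')) := by
      field_simp; ring
    linarith
  · rw [hf']; positivity

/-- If the end speed is kept, lowering the initial speed by `x - x'` costs time `1/√x' - 1/√x`. -/
lemma stageGap_ge_of_keep {lam η G x y t x' : ℝ} (hh : 0 < h) (hM : 0 < M) (hlam : 0 ≤ lam)
    (hη1 : η ≤ 1) (ha : 0 ≤ 1 - h * γ) (ht : 1 / √x ≤ t) (hxx : x' ≤ x) :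
    h * (1 / √x - 1 / √x') + M / Pmax * ((1 - h * γ) * (x - x')) ≤
      stageGap h γ M Pmax lam η G x y t x' y := by
  refine le_trans ?_ (stageGap_ge (Pmax := Pmax) hh hM hlam hη1 (Or.inr ?_))
  · have := mul_le_mul_of_nonneg_left ht hh.le
    linarith
  · have e : ∀ z : ℝ, (y - z) / h + γ * z + G = y / h + G - (1 - h * γ) * z / h := by
      intro z; field_simp; ring
    rw [e, e]
    have : (1 - h * γ) * x' / h ≤ (1 - h * γ) * x / h := by gcongr
    linarith

/-- Strictness: a stage where the truncated profile rejoins `w` has a positive gap, because `1/√x` is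
strictly less steep than its slope at `w̄` on a nontrivial interval above `w̄`. -/
lemma stageGap_pos {lam η G x y t x' : ℝ} (hh : 0 < h) (hg : 0 < g) (hM : 0 < M)
    (hP : 0 < Pmax) (hμ : 0 < μ) (hlam : 0 ≤ lam) (hη1 : η ≤ 1)
    (hA : h * Pmax / (M * (2 * (Pmax / (M * g * μ)) ^ 3)) ≤ 1 - h * γ)
    (ht : 1 / √x ≤ t) (hx' : (Pmax / (M * g * μ)) ^ 2 ≤ x') (hxx : x' < x) :
    0 < stageGap h γ M Pmax lam η G x y t x' y := by
  have hs : 0 < Pmax / (M * g * μ) := by positivity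
  have ha : 0 ≤ 1 - h * γ := le_trans (by positivity) hA
  refine lt_of_lt_of_le ?_ (stageGap_ge_of_keep hh hM hlam hη1 ha ht hxx.le)
  have h1 := mul_lt_mul_of_pos_left (power_drop_lt hh hg hM hP hμ hA hx' hxx)
    (show 0 < M / Pmax by positivity)
  have h2 : M / Pmax * (h * Pmax / M * (1 / √x' - 1 / √x)) = h * (1 / √x' - 1 / √x) := by
    field_simp
  linarith

end Profile

/-! ### Truncated profile and exactness -/

/-- Forward truncation of a speed profile: for nondecreasing `ℓ`, the largest profile
below `w` with the same initial speed `w 1` that respects `w_{i+1} + h g (sin α_i + c) ≤ ℓ(w_i)`. Stages start at index `1`, so the value at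
`0` is irrelevant. -/
noncomputable def cutProfile (h γ g M Pmax μ c : ℝ) (α w : ℕ → ℝ) : ℕ → ℝ
  | 0 => w 0
  | k + 1 => if k = 0 then w 1 else
      min (w (k + 1)) (ell h γ g M Pmax μ (cutProfile h γ g M Pmax μ c α w k) -
        h * (g * (Real.sin (α k) + c)))

/-- The telescoping bound: `Σ (d_{i+1} - (1 - hγ) d_i) ≥ d_n - d_1`. -/
lemma sum_weighted_diff_ge {b : ℝ} (hb : 0 ≤ b) (d : ℕ → ℝ) (m : ℕ)
    (hd : ∀ i, 1 ≤ i → i ≤ m → 0 ≤ d i) :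
    d (m + 1) - d 1 ≤ ∑ i ∈ Finset.Icc 1 m, (d (i + 1) - (1 - b) * d i) := by
  induction m with
  | zero => simp
  | succ m ih =>
    rw [Finset.sum_Icc_succ_top (by omega)]
    have h1 := ih fun i h1 h2 => hd i h1 (by omega)
    have h2 := mul_nonneg hb (hd (m + 1) (by omega) le_rfl)
    linarith

/-- under Assumptions 1, 2 and 3, if `l ≤ w^max`, then every optimal
solution `(w*,t*)` of the strengthened relaxation (R′) satisfies
`t*_i = 1/√(w*_i)` for all `i`, is feasible and optimal for (P); moreover (P) and
(R′) have the same optimal value and the same optimal solutions. -/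
theorem strengthened_relaxation_exact (n : ℕ) (hn : 2 ≤ n)
    (h γ g M Pmax μ c lam η winit wfin : ℝ)
    (hh : 0 < h) (hg : 0 < g) (hM : 0 < M) (hP : 0 < Pmax) (hμ : 0 < μ)
    (hγ : 0 ≤ γ) (hc : 0 ≤ c) (hlam : 0 ≤ lam) (hη0 : 0 ≤ η) (hη1 : η ≤ 1)
    (hwinit : 0 ≤ winit) (hwfin : 0 ≤ wfin)
    (α wmin wmax : ℕ → ℝ)
    (hwmaxpos : ∀ i, 1 ≤ i → i ≤ n → 0 ≤ wmax i)
    (hwmax1 : wmax 1 = winit) (hwmaxn : wmax n = wfin)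
    (hwmin1 : wmin 1 = winit) (hwminn : wmin n = wfin)
    (hwminmid : ∀ i, 2 ≤ i → i ≤ n - 1 → wmin i = 0)
    -- Assumption 1
    (hA1a : 0 < lam * γ * Pmax * h + 1 - lam)
    (hA1b : (1 - h * γ) * (Pmax / (M * g * μ)) ^ 2 - h * g * (1 + c) >
      (Pmax * h / (2 * M * (lam * γ * Pmax * h + 1 - lam))) ^ ((2:ℝ)/3))
    -- Assumption 2
    (hA2 : ∀ i, 1 ≤ i → i ≤ n → (Pmax / (M * g * μ)) ^ 2 < wmax i →
      0 ≤ Pmax / M *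
          Real.sqrt ((1 - h * γ) /
            ((Pmax / (M * g * μ)) ^ 2 + h * g * (Real.sin (α i) + c))) -
        γ / (1 - h * γ) * ((Pmax / (M * g * μ)) ^ 2 + h * g * (Real.sin (α i) + c)) -
        g * (Real.sin (α i) + c))
    -- Assumption 3
    (hA3 : 0 ≤ 1 - h * γ - h * Pmax / (2 * M * ((Pmax / (M * g * μ)) ^ 2) ^ ((3:ℝ)/2)))
    -- the vector l of tightened lower bounds
    (l : ℕ → ℝ) (hln : l n = wfin)
    (hl : ∀ j, 1 ≤ j → j ≤ n - 1 →
      IsLeast {x : ℝ | wmin j ≤ x ∧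
        l (j + 1) + h * g * (Real.sin (α j) + c) ≤ ell h γ g M Pmax μ x} (l j))
    (hlwmax : ∀ i, 1 ≤ i → i ≤ n → l i ≤ wmax i)
    (w t : ℕ → ℝ)
    (hfeas : FeasR' n h γ g M Pmax μ c α wmin wmax l w t)
    (hopt : ∀ w' t', FeasR' n h γ g M Pmax μ c α wmin wmax l w' t' →
      J n h γ g c lam M η α w t ≤ J n h γ g c lam M η α w' t') :
    (∀ i, 1 ≤ i → i ≤ n - 1 → t i = 1 / Real.sqrt (w i)) ∧
    FeasP n h γ g M Pmax μ c α wmin wmax w t ∧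
    (∀ w' t', FeasP n h γ g M Pmax μ c α wmin wmax w' t' →
      J n h γ g c lam M η α w t ≤ J n h γ g c lam M η α w' t') ∧
    (∀ w' t', FeasP n h γ g M Pmax μ c α wmin wmax w' t' →
      (∀ w'' t'', FeasP n h γ g M Pmax μ c α wmin wmax w'' t'' →
        J n h γ g c lam M η α w' t' ≤ J n h γ g c lam M η α w'' t'') →
      FeasR' n h γ g M Pmax μ c α wmin wmax l w' t' ∧
      (∀ w'' t'', FeasR' n h γ g M Pmax μ c α wmin wmax l w'' t'' →
        J n h γ g c lam M η α w' t' ≤ J n h γ g c lam M η α w'' t'')) := by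
  have hs : 0 < Pmax / (M * g * μ) := by positivity
  have hA := assumption_three_cube hg hM hP hμ hA3
  have ha : 0 < 1 - h * γ := lt_of_lt_of_le (by positivity) hA
  have hW : 0 < (Pmax / (M * g * μ)) ^ 2 := by positivity
  have hmono : ∀ {x y : ℝ}, x ≤ y → ell h γ g M Pmax μ x ≤ ell h γ g M Pmax μ y :=
    fun hxy => ell_mono hh hg hM hP hμ hA hxy
  have hGe : ∀ i, h * g * (Real.sin (α i) + c) = h * (g * (Real.sin (α i) + c)) :=
    fun i => by ring
  -- Points feasible for (P) lie above `l`, by backward induction on the index.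
  have hPR : ∀ w' t', FeasP n h γ g M Pmax μ c α wmin wmax w' t' →
      FeasR' n h γ g M Pmax μ c α wmin wmax l w' t' := by
    intro w' t' hf
    refine ⟨hf.1, fun i hi1 hin => ?_⟩
    induction hin using Nat.decreasingInduction with
    | self => rw [hln, ← hwminn]; exact (hf.1.1 n hi1 le_rfl).2.1
    | of_succ k hk ih =>
      have hkn : k ≤ n - 1 := by omega
      have ih' := ih (by omega)
      refine (hl k hi1 hkn).2 ⟨(hf.1.1 k hi1 (by omega)).2.1, ?_⟩
      obtain ⟨h1, -, h3⟩ := hf.1.2 k hi1 hkn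
      rw [hf.2 k hi1 hkn] at h3
      have h1' : (w' (k + 1) - w' k) / h + γ * w' k + g * (Real.sin (α k) + c) ≤ g * μ :=
        (abs_le.1 h1).2
      have h3' : M * ((w' (k + 1) - w' k) / h + γ * w' k + g * (Real.sin (α k) + c)) / Pmax ≤
        1 / √(w' k) := h3
      rw [hGe]
      refine le_trans (by linarith : _ ≤ w' (k + 1) + h * (g * (Real.sin (α k) + c))) ?_
      rcases le_total (w' k) ((Pmax / (M * g * μ)) ^ 2) with hx | hx
      · exact le_ell_of_force_le hh h1' hx
      · rw [ell_of_ge hg hM hP hμ hx]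
        have h5 := mul_le_mul_of_nonneg_left h3' (show 0 ≤ h * Pmax / M by positivity)
        have h6 : h * Pmax / M *
            (M * ((w' (k + 1) - w' k) / h + γ * w' k + g * (Real.sin (α k) + c)) / Pmax) =
            w' (k + 1) - w' k + h * γ * w' k + h * (g * (Real.sin (α k) + c)) := by
          field_simp
        linarith
  obtain ⟨⟨hbox, hstage⟩, hlw⟩ := id hfeas
  set v := cutProfile h γ g M Pmax μ c α w with hv
  have hv1 : v 1 = w 1 := by simp [hv, cutProfile]
  have hvs : ∀ k, 1 ≤ k → v (k + 1) =
      min (w (k + 1)) (ell h γ g M Pmax μ (v k) - h * (g * (Real.sin (α k) + c))) := by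
    intro k hk
    rw [hv, cutProfile, if_neg (by omega)]
  have hvw : ∀ i, 1 ≤ i → v i ≤ w i := by
    intro i hi
    rcases hi.eq_or_lt with rfl | hi
    · exact hv1.le
    · obtain ⟨k, rfl⟩ : ∃ k, i = k + 1 := ⟨i - 1, by omega⟩
      rw [hvs k (by omega)]
      exact min_le_left _ _
  -- One stage: either the speed is kept, or the start is supercritical and the truncated value is
  -- at least the critical speed.
  have hstep : ∀ k, 1 ≤ k → k ≤ n - 1 →
      (v k = w k ∨ (Pmax / (M * g * μ)) ^ 2 ≤ v k ∧ v k < w k) →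
      v (k + 1) = w (k + 1) ∨ ((Pmax / (M * g * μ)) ^ 2 ≤ v k ∧
        (Pmax / (M * g * μ)) ^ 2 ≤ v (k + 1) ∧ v (k + 1) < w (k + 1) ∧
        v (k + 1) = ell h γ g M Pmax μ (v k) - h * (g * (Real.sin (α k) + c))) := by
    intro k hk hkn hk'
    by_cases hkeep : w (k + 1) ≤ ell h γ g M Pmax μ (v k) - h * (g * (Real.sin (α k) + c))
    · left; rw [hvs k hk, min_eq_left hkeep]
    · right
      push Not at hkeep
      have hcut : v (k + 1) = ell h γ g M Pmax μ (v k) - h * (g * (Real.sin (α k) + c)) := by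
        rw [hvs k hk, min_eq_right hkeep.le]
      have hsup : (Pmax / (M * g * μ)) ^ 2 ≤ v k ∧ (Pmax / (M * g * μ)) ^ 2 < w k := by
        rcases hk' with he | ⟨h1, h2⟩
        · have : (Pmax / (M * g * μ)) ^ 2 < w k := by
            by_contra hcon
            push Not at hcon
            have := le_ell_of_force_le (M := M) (Pmax := Pmax) hh
              (show (w (k + 1) - w k) / h + γ * w k + g * (Real.sin (α k) + c) ≤ g * μ from
                (abs_le.1 (hstage k hk hkn).1).2) hcon
            rw [he] at hkeep
            linarith
          exact ⟨he ▸ this.le, this⟩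
        · exact ⟨h1, h1.trans_lt h2⟩
      have h2 := hA2 k hk (by omega) (hsup.2.trans_le (hbox k hk (by omega)).2.2)
      rw [hGe] at h2
      refine ⟨hsup.1, ?_, hcut ▸ hkeep, hcut⟩
      rw [hcut]
      exact critical_le_ell_sub hh hg hM hP hμ hγ ha h2 hsup.1
  have hinv : ∀ i, 1 ≤ i → i ≤ n →
      v i = w i ∨ (Pmax / (M * g * μ)) ^ 2 ≤ v i ∧ v i < w i := by
    intro i hi
    induction i, hi using Nat.le_induction with
    | base => exact fun _ => Or.inl hv1
    | succ k hk ih =>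
      intro hkn
      rcases hstep k hk (by omega) (ih (by omega)) with h1 | ⟨-, h1, h2, -⟩
      · exact Or.inl h1
      · exact Or.inr ⟨h1, h2⟩
  -- Monotonicity of `ℓ` preserves the lower bounds `l` under truncation.
  have hlv : ∀ i, 1 ≤ i → i ≤ n → l i ≤ v i := by
    intro i hi
    induction i, hi using Nat.le_induction with
    | base => intro h1; rw [hv1]; exact hlw 1 le_rfl h1
    | succ k hk ih =>
      intro hkn
      rw [hvs k hk]
      refine le_min (hlw _ (by omega) hkn) ?_
      have h1 := (hl k hk (by omega)).1.2
      have h2 := hmono (ih (by omega))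
      rw [hGe] at h1
      linarith
  have hvn : v n = w n := by
    refine le_antisymm (hvw n (by omega)) ?_
    have h1 := hlv n (by omega) le_rfl
    have h2 := (hbox n (by omega) le_rfl).2.2
    rw [hwmaxn] at h2
    linarith
  have hvpos : ∀ i, 1 ≤ i → i ≤ n → 0 < v i := by
    intro i hi hin
    rcases hinv i hi hin with h1 | ⟨h1, -⟩
    · rw [h1]; exact (hbox i hi hin).1
    · exact hW.trans_le h1
  have hvP : FeasP n h γ g M Pmax μ c α wmin wmax v (fun i => 1 / √(v i)) := by
    refine ⟨⟨fun i hi hin => ⟨hvpos i hi hin, ?_, (hvw i hi).trans (hbox i hi hin).2.2⟩,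
      fun i hi hin => ?_⟩, fun _ _ _ => rfl⟩
    · rcases Nat.lt_or_ge i n with hlt | hge
      · exact (hl i hi (by omega)).1.1.trans (hlv i hi hin)
      · obtain rfl : i = n := le_antisymm hin hge
        rw [hvn]; exact (hbox i hi hin).2.1
    · have hpos := hvpos i hi (by omega)
      have hsq : 0 < √(v i) := Real.sqrt_pos.2 hpos
      have hup : v (i + 1) + h * (g * (Real.sin (α i) + c)) ≤ ell h γ g M Pmax μ (v i) := by
        have : v (i + 1) ≤ ell h γ g M Pmax μ (v i) - h * (g * (Real.sin (α i) + c)) := by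
          rw [hvs i hi]; exact min_le_right _ _
        linarith
      have hF : fdisc h γ g c α v i * h =
          v (i + 1) + h * (g * (Real.sin (α i) + c)) - (1 - h * γ) * v i := by
        unfold fdisc; field_simp; ring
      -- `ℓ` is the minimum of its two branches.
      have hmin : ell h γ g M Pmax μ (v i) ≤ (1 - h * γ) * v i + h * (g * μ) ∧
          ell h γ g M Pmax μ (v i) ≤ (1 - h * γ) * v i + h * (Pmax / M * (1 / √(v i))) := by
        rcases le_total (v i) ((Pmax / (M * g * μ)) ^ 2) with hx | hx
        · have e : ell h γ g M Pmax μ (v i) = (1 - h * γ) * v i + h * (g * μ) := by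
            unfold ell; rw [if_pos hx]; ring
          refine ⟨e.le, ?_⟩
          have h1 : √(v i) ≤ Pmax / (M * g * μ) := by
            rw [← Real.sqrt_sq hs.le]; exact Real.sqrt_le_sqrt hx
          have h2 : g * μ ≤ Pmax / M * (1 / √(v i)) := by
            rw [div_mul_div_comm, mul_one, le_div_iff₀ (by positivity)]
            rw [le_div_iff₀ (by positivity)] at h1
            linarith
          have := mul_le_mul_of_nonneg_left h2 hh.le
          linarith
        · have e : ell h γ g M Pmax μ (v i) =
              (1 - h * γ) * v i + h * (Pmax / M * (1 / √(v i))) := by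
            rw [ell_of_ge hg hM hP hμ hx]; ring
          have := mul_le_mul_of_nonneg_left (power_le_traction hg hM hP hμ hx) hh.le
          exact ⟨by linarith, e.le⟩
      have hlow : -(g * μ) ≤ fdisc h γ g c α v i := by
        rcases hstep i hi hin (hinv i hi (by omega)) with h1 | ⟨h1, -, -, h2⟩
        · have h3 := (abs_le.1 (hstage i hi hin).1).1
          have h4 : fdisc h γ g c α w i * h =
              w (i + 1) + h * (g * (Real.sin (α i) + c)) - (1 - h * γ) * w i := by
            unfold fdisc; field_simp; ring
          have h5 := mul_le_mul_of_nonneg_left (hvw i hi) ha.le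
          have : fdisc h γ g c α w i * h ≤ fdisc h γ g c α v i * h := by
            rw [hF, h4, h1]; linarith
          exact h3.trans (le_of_mul_le_mul_right this hh)
        · rw [ell_of_ge hg hM hP hμ h1] at h2
          have h3 : 0 < h * Pmax / M * (1 / √(v i)) := by positivity
          have h4 : 0 * h ≤ fdisc h γ g c α v i * h := by rw [hF, h2]; linarith
          have h5 := le_of_mul_le_mul_right h4 hh
          have : 0 < g * μ := by positivity
          linarith
      refine ⟨abs_le.2 ⟨hlow, ?_⟩, le_rfl, ?_⟩
      · refine le_of_mul_le_mul_right ?_ hh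
        rw [hF]; linarith [hmin.1]
      · have h1 : fdisc h γ g c α v i ≤ Pmax / M * (1 / √(v i)) := by
          refine le_of_mul_le_mul_right ?_ hh
          rw [hF]; linarith [hmin.2]
        have h2 := mul_le_mul_of_nonneg_left h1 (show 0 ≤ M / Pmax by positivity)
        have h3 : M / Pmax * (Pmax / M * (1 / √(v i))) = 1 / √(v i) := by field_simp
        calc M * fdisc h γ g c α v i / Pmax = M / Pmax * fdisc h γ g c α v i := by ring
          _ ≤ _ := h2
          _ = _ := h3
  -- The stage gaps are nonnegative, and optimality makes their sum nonpositive.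
  let gap : ℕ → ℝ := fun i => stageGap h γ M Pmax lam η (g * (Real.sin (α i) + c))
    (w i) (w (i + 1)) (t i) (v i) (v (i + 1))
  have hgap0 : ∀ i, 1 ≤ i → i ≤ n - 1 → 0 ≤ gap i := by
    intro i hi hin
    obtain ⟨-, ht1, ht2⟩ := hstage i hi hin
    rcases hstep i hi hin (hinv i hi (by omega)) with h1 | ⟨h1, -, -, h2⟩
    · simp only [gap, h1]
      rcases hinv i hi (by omega) with h3 | ⟨h3, h4⟩
      · have := stageGap_ge_of_keep (Pmax := Pmax) (G := g * (Real.sin (α i) + c))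
          (y := w (i + 1)) hh hM hlam hη1 ha.le ht1 (hvw i hi)
        rw [h3] at this ⊢
        simpa using this
      · exact (stageGap_pos hh hg hM hP hμ hlam hη1 hA ht1 h3 h4).le
    · exact stageGap_nonneg_of_cut hh hg hM hP hμ hlam hη1 ht2 h1 h2
  have hsum : ∑ i ∈ Finset.Icc 1 (n - 1), gap i ≤ 0 := by
    have h1 := hopt v _ (hPR _ _ hvP)
    have h2 := sum_weighted_diff_ge (mul_nonneg hh.le hγ) (fun i => w i - v i) (n - 1)
      (fun i hi _ => sub_nonneg.2 (hvw i hi))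
    have hn1 : n - 1 + 1 = n := by omega
    simp only [hn1, hvn, hv1, sub_self] at h2
    have h3 : ∑ i ∈ Finset.Icc 1 (n - 1), gap i =
        J n h γ g c lam M η α w t - J n h γ g c lam M η α v (fun i => 1 / √(v i)) -
        (lam * M + M / Pmax) * ∑ i ∈ Finset.Icc 1 (n - 1),
          ((w (i + 1) - v (i + 1)) - (1 - h * γ) * (w i - v i)) := by
      unfold J
      rw [Finset.mul_sum, ← Finset.sum_sub_distrib, ← Finset.sum_sub_distrib]
      rfl
    rw [h3]
    have := mul_nonneg (show 0 ≤ lam * M + M / Pmax by positivity) h2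
    linarith
  have hgap : ∀ i, 1 ≤ i → i ≤ n - 1 → gap i = 0 := by
    intro i hi hin
    have hnn : ∀ j ∈ Finset.Icc 1 (n - 1), 0 ≤ gap j := fun j hj =>
      hgap0 j (Finset.mem_Icc.1 hj).1 (Finset.mem_Icc.1 hj).2
    exact (Finset.sum_eq_zero_iff_of_nonneg hnn).1 (le_antisymm hsum (Finset.sum_nonneg hnn)) i
      (Finset.mem_Icc.2 ⟨hi, hin⟩)
  -- A last index with `v i < w i` would carry a positive gap.
  have heq : ∀ i, 1 ≤ i → i ≤ n → v i = w i := by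
    intro i hi hin
    induction hin using Nat.decreasingInduction with
    | self => exact hvn
    | of_succ k hk ih =>
      have h1 := ih (by omega)
      rcases hinv k hi (by omega) with h3 | ⟨h3, h4⟩
      · exact h3
      · have h5 := hgap k hi (by omega)
        simp only [gap, h1] at h5
        exact absurd h5 (stageGap_pos hh hg hM hP hμ hlam hη1 hA
          (hstage k hi (by omega)).2.1 h3 h4).ne'
  have htt : ∀ i, 1 ≤ i → i ≤ n - 1 → t i = 1 / √(w i) := by
    intro i hi hin
    have h1 := hgap i hi hin
    simp only [gap, heq i hi (by omega), heq (i + 1) (by omega) (by omega), stageGap] at h1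
    have h2 : h * (t i - 1 / √(w i)) = 0 := by linarith
    rcases mul_eq_zero.1 h2 with h3 | h3
    · exact absurd h3 hh.ne'
    · linarith
  have hwP : FeasP n h γ g M Pmax μ c α wmin wmax w t := ⟨hfeas.1, htt⟩
  exact ⟨htt, hwP, fun w' t' hf => hopt w' t' (hPR w' t' hf), fun w' t' hf hmin' =>
    ⟨hPR w' t' hf, fun w'' t'' hf'' => (hmin' w t hwP).trans (hopt w'' t'' hf'')⟩⟩
end

section
/- Assume 1 − hγ > 0. The backward recursion u′_n = w_fin, u′_j = ξ4(j, u′_{j+1}) defines valid upper bounds over X4: for every w ∈ X4 and every j ∈ {1,…,n}, w_j ≤ u′_j. -/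
/-- Membership in `X4`: upper limits plus minimum-force constraints
`w_{j+1} ≥ (1−hγ)w_j − h g (sin α_j + c + μ)`. -/
def memX4 (n : ℕ) (h γ g μ c : ℝ) (α wmax w : ℕ → ℝ) : Prop :=
  (∀ i, 1 ≤ i → i ≤ n → w i ≤ wmax i) ∧
  (∀ j, 1 ≤ j → j ≤ n - 1 →
    (1 - h * γ) * w j - h * g * (Real.sin (α j) + c + μ) ≤ w (j + 1))

/-- assuming `1 − hγ > 0`, the backward recursion
`u′_n = w_fin`, `u′_j = ξ4(j,u′_{j+1}) = min{w^max_j, (u′_{j+1} + h g (sin α_j + c + μ))/(1−hγ)}`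
defines valid upper bounds over `X4`: every `w ∈ X4` satisfies `w_j ≤ u′_j` for all
`j ∈ {1,…,n}`. -/
theorem uprime_upper_bounds_over_X4 (n : ℕ) (hn : 2 ≤ n)
    (h γ g μ c wfin : ℝ)
    (hh : 0 < h) (hg : 0 < g) (hμ : 0 < μ) (hγ : 0 ≤ γ) (hc : 0 ≤ c)
    (hwfin : 0 ≤ wfin)
    (hcontr : 0 < 1 - h * γ)
    (α wmax : ℕ → ℝ)
    (hwmaxpos : ∀ i, 1 ≤ i → i ≤ n → 0 ≤ wmax i) (hwmaxn : wmax n = wfin)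
    (u' : ℕ → ℝ) (hu'n : u' n = wfin)
    (hu' : ∀ j, 1 ≤ j → j ≤ n - 1 →
      u' j = min (wmax j)
        ((u' (j + 1) + h * g * (Real.sin (α j) + c + μ)) / (1 - h * γ))) :
    ∀ w, memX4 n h γ g μ c α wmax w → ∀ j, 1 ≤ j → j ≤ n → w j ≤ u' j := by
  rintro w ⟨hmax, hstep⟩ j hj1 hjn
  -- Backward induction: dividing by `1 - h * γ > 0` turns the constraint linking `w j` and
  -- `w (j + 1)` into an upper bound on `w j` that is monotone in `w (j + 1)`.
  induction hjn using Nat.decreasingInduction with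
  | self =>
    rw [hu'n, ← hwmaxn]
    exact hmax n hj1 le_rfl
  | of_succ k hk ih =>
    have hk' : k ≤ n - 1 := by omega
    rw [hu' k hj1 hk']
    refine le_min (hmax k hj1 hk.le) ?_
    rw [le_div_iff₀ hcontr]
    linarith [hstep k hj1 hk', ih (Nat.le_add_left 1 k)]
end

section
/- Under Assumption 3, the sets X1 ∩ X3 and X2 ∩ X4 are lattices with respect to componentwise maximum and minimum: if w, w′ belong to X1 ∩ X3 (respectively X2 ∩ X4), then so do their componentwise maximum and componentwise minimum. -/
/-- Membership in `X2`. -/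
def memX2 (n : ℕ) (h γ g M Pmax μ c : ℝ) (α wmax w : ℕ → ℝ) : Prop :=
  (∀ i, 1 ≤ i → i ≤ n → w i ≤ wmax i) ∧
  (∀ j, 1 ≤ j → j ≤ n - 1 →
    w (j + 1) ≤ ell h γ g M Pmax μ (w j) - h * g * (Real.sin (α j) + c))

/-- Membership in `X3`. -/
def memX3 (n : ℕ) (h γ g μ c : ℝ) (α wmin w : ℕ → ℝ) : Prop :=
  (∀ i, 1 ≤ i → i ≤ n → wmin i ≤ w i) ∧
  (∀ j, 1 ≤ j → j ≤ n - 1 →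
    (1 - h * γ) * w j - h * g * (Real.sin (α j) + c + μ) ≤ w (j + 1))

/-- The high-speed branch of `ell`, in the variable `s = √w`, is nondecreasing beyond `s₀`. -/
lemma high_speed_mono {A K s₀ s t : ℝ} (hA : 0 ≤ A) (hs₀ : 0 < s₀) (hK : K ≤ 2 * A * s₀ ^ 3)
    (hs : s₀ ≤ s) (hst : s ≤ t) : A * s ^ 2 + K / s ≤ A * t ^ 2 + K / t := by
  have hs' : 0 < s := hs₀.trans_le hs
  have ht' : 0 < t := hs'.trans_le hst
  have hcube : 2 * A * s₀ ^ 3 ≤ A * ((t + s) * (s * t)) := by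
    have h1 : s₀ * s₀ ≤ s * t := mul_le_mul hs (hs.trans hst) hs₀.le hs'.le
    have h2 : (2 * s₀) * (s₀ * s₀) ≤ (t + s) * (s * t) :=
      mul_le_mul (by linarith) h1 (by positivity) (by positivity)
    calc 2 * A * s₀ ^ 3 = A * ((2 * s₀) * (s₀ * s₀)) := by ring
      _ ≤ _ := mul_le_mul_of_nonneg_left h2 hA
  have hdiff : A * t ^ 2 + K / t - (A * s ^ 2 + K / s)
      = (t - s) * (A * ((t + s) * (s * t)) - K) / (s * t) := by
    field_simp
    ring
  have hnonneg : 0 ≤ (t - s) * (A * ((t + s) * (s * t)) - K) / (s * t) :=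
    div_nonneg (mul_nonneg (by linarith) (by linarith)) (by positivity)
  linarith

lemma coeff_nonneg {h γ g M Pmax μ : ℝ} (hh : 0 < h) (hg : 0 < g) (hM : 0 < M) (hP : 0 < Pmax)
    (hμ : 0 < μ)
    (hA3 : 0 ≤ 1 - h * γ - h * Pmax / (2 * M * ((Pmax / (M * g * μ)) ^ 2) ^ ((3:ℝ)/2))) :
    0 ≤ 1 - h * γ := by
  have : 0 ≤ h * Pmax / (2 * M * ((Pmax / (M * g * μ)) ^ 2) ^ ((3:ℝ)/2)) := by positivity
  linarith

lemma ell_monotone {h γ g M Pmax μ : ℝ} (hh : 0 < h) (hg : 0 < g) (hM : 0 < M) (hP : 0 < Pmax)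
    (hμ : 0 < μ)
    (hA3 : 0 ≤ 1 - h * γ - h * Pmax / (2 * M * ((Pmax / (M * g * μ)) ^ 2) ^ ((3:ℝ)/2))) :
    Monotone (ell h γ g M Pmax μ) := by
  have hA := coeff_nonneg hh hg hM hP hμ hA3
  have hs₀ : 0 < Pmax / (M * g * μ) := by positivity
  have hval : h * g * μ = h * Pmax / M / (Pmax / (M * g * μ)) := by field_simp
  intro a b hab
  unfold ell
  rw [hval]
  set s₀ := Pmax / (M * g * μ)
  set A := 1 - h * γ
  have hpow : (s₀ ^ 2) ^ ((3:ℝ)/2) = s₀ ^ 3 := by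
    rw [← Real.rpow_natCast s₀ 2, ← Real.rpow_mul hs₀.le, ← Real.rpow_natCast s₀ 3]
    norm_num
  have hK : h * Pmax / M ≤ 2 * A * s₀ ^ 3 := by
    rw [hpow] at hA3
    have h1 : h * Pmax / (2 * M * s₀ ^ 3) ≤ A := by linarith
    rw [div_le_iff₀ (by positivity)] at h1
    rw [div_le_iff₀ hM]
    linarith
  have hsqrt : ∀ w, s₀ ^ 2 < w → s₀ ≤ √w ∧ √w ^ 2 = w := fun w hw =>
    ⟨Real.le_sqrt_of_sq_le hw.le, Real.sq_sqrt ((sq_nonneg s₀).trans hw.le)⟩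
  split_ifs with ha hb hb
  · linarith [mul_le_mul_of_nonneg_left hab hA]
  -- Across the critical speed, compare both values with the common one at `s₀ ^ 2`.
  · obtain ⟨h1, h2⟩ := hsqrt b (not_le.mp hb)
    have h3 := high_speed_mono hA hs₀ hK le_rfl h1
    rw [h2, div_div _ M (√b)] at h3
    linarith [mul_le_mul_of_nonneg_left ha hA]
  · exact absurd (hab.trans hb) ha
  · obtain ⟨h1, h2⟩ := hsqrt a (not_le.mp ha)
    obtain ⟨-, h4⟩ := hsqrt b (not_le.mp hb)
    have h3 := high_speed_mono hA hs₀ hK h1 (Real.sqrt_le_sqrt hab)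
    rwa [h2, h4, div_div _ M, div_div _ M] at h3

/-- under Assumption 3, `X1 ∩ X3` and `X2 ∩ X4` are lattices with respect
to componentwise maximum and minimum. -/
theorem X13_X24_are_lattices (n : ℕ) (hn : 2 ≤ n)
    (h γ g M Pmax μ c winit wfin : ℝ)
    (hh : 0 < h) (hg : 0 < g) (hM : 0 < M) (hP : 0 < Pmax) (hμ : 0 < μ)
    (hγ : 0 ≤ γ) (hc : 0 ≤ c) (hwinit : 0 ≤ winit) (hwfin : 0 ≤ wfin)
    (hA3 : 0 ≤ 1 - h * γ - h * Pmax / (2 * M * ((Pmax / (M * g * μ)) ^ 2) ^ ((3:ℝ)/2)))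
    (α wmin wmax : ℕ → ℝ)
    (hwmaxpos : ∀ i, 1 ≤ i → i ≤ n → 0 ≤ wmax i)
    (hwmax1 : wmax 1 = winit) (hwmaxn : wmax n = wfin)
    (hwmin1 : wmin 1 = winit) (hwminn : wmin n = wfin)
    (hwminmid : ∀ i, 2 ≤ i → i ≤ n - 1 → wmin i = 0) :
    (∀ w w' : ℕ → ℝ,
      memX1 n h γ g M Pmax μ c α wmin w ∧ memX3 n h γ g μ c α wmin w →
      memX1 n h γ g M Pmax μ c α wmin w' ∧ memX3 n h γ g μ c α wmin w' →
      (memX1 n h γ g M Pmax μ c α wmin (fun i => max (w i) (w' i)) ∧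
        memX3 n h γ g μ c α wmin (fun i => max (w i) (w' i))) ∧
      (memX1 n h γ g M Pmax μ c α wmin (fun i => min (w i) (w' i)) ∧
        memX3 n h γ g μ c α wmin (fun i => min (w i) (w' i)))) ∧
    (∀ w w' : ℕ → ℝ,
      memX2 n h γ g M Pmax μ c α wmax w ∧ memX4 n h γ g μ c α wmax w →
      memX2 n h γ g M Pmax μ c α wmax w' ∧ memX4 n h γ g μ c α wmax w' →
      (memX2 n h γ g M Pmax μ c α wmax (fun i => max (w i) (w' i)) ∧
        memX4 n h γ g μ c α wmax (fun i => max (w i) (w' i))) ∧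
      (memX2 n h γ g M Pmax μ c α wmax (fun i => min (w i) (w' i)) ∧
        memX4 n h γ g μ c α wmax (fun i => min (w i) (w' i)))) := by
  have hell := ell_monotone hh hg hM hP hμ hA3
  have hlin : Monotone fun x : ℝ => (1 - h * γ) * x := fun _ _ hab =>
    mul_le_mul_of_nonneg_left hab (coeff_nonneg hh hg hM hP hμ hA3)
  -- The two kinds of coupling constraint, for arbitrary values `x, y` at `j` and `x', y'` at `j + 1`.
  have up_max : ∀ {x y x' y' d : ℝ}, x' ≤ ell h γ g M Pmax μ x - d →
      y' ≤ ell h γ g M Pmax μ y - d → max x' y' ≤ ell h γ g M Pmax μ (max x y) - d := by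
    intro x y x' y' d hx hy
    rw [hell.map_max, ← max_sub_sub_right]
    exact max_le_max hx hy
  have up_min : ∀ {x y x' y' d : ℝ}, x' ≤ ell h γ g M Pmax μ x - d →
      y' ≤ ell h γ g M Pmax μ y - d → min x' y' ≤ ell h γ g M Pmax μ (min x y) - d := by
    intro x y x' y' d hx hy
    rw [hell.map_min, ← min_sub_sub_right]
    exact min_le_min hx hy
  have lo_max : ∀ {x y x' y' d : ℝ}, (1 - h * γ) * x - d ≤ x' →
      (1 - h * γ) * y - d ≤ y' → (1 - h * γ) * max x y - d ≤ max x' y' := by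
    intro x y x' y' d hx hy
    have hmap : (1 - h * γ) * max x y = max ((1 - h * γ) * x) ((1 - h * γ) * y) := hlin.map_max
    rw [hmap, ← max_sub_sub_right]
    exact max_le_max hx hy
  have lo_min : ∀ {x y x' y' d : ℝ}, (1 - h * γ) * x - d ≤ x' →
      (1 - h * γ) * y - d ≤ y' → (1 - h * γ) * min x y - d ≤ min x' y' := by
    intro x y x' y' d hx hy
    have hmap : (1 - h * γ) * min x y = min ((1 - h * γ) * x) ((1 - h * γ) * y) := hlin.map_min
    rw [hmap, ← min_sub_sub_right]
    exact min_le_min hx hy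
  constructor
  · rintro w w' ⟨⟨b, u⟩, -, l⟩ ⟨⟨b', u'⟩, -, l'⟩
    have bmax : ∀ i, 1 ≤ i → i ≤ n → wmin i ≤ max (w i) (w' i) :=
      fun i h1 h2 => le_max_of_le_left (b i h1 h2)
    have bmin : ∀ i, 1 ≤ i → i ≤ n → wmin i ≤ min (w i) (w' i) :=
      fun i h1 h2 => le_min (b i h1 h2) (b' i h1 h2)
    exact ⟨⟨⟨bmax, fun j h1 h2 => up_max (u j h1 h2) (u' j h1 h2)⟩,
        ⟨bmax, fun j h1 h2 => lo_max (l j h1 h2) (l' j h1 h2)⟩⟩,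
      ⟨⟨bmin, fun j h1 h2 => up_min (u j h1 h2) (u' j h1 h2)⟩,
        ⟨bmin, fun j h1 h2 => lo_min (l j h1 h2) (l' j h1 h2)⟩⟩⟩
  · rintro w w' ⟨⟨b, u⟩, -, l⟩ ⟨⟨b', u'⟩, -, l'⟩
    have bmax : ∀ i, 1 ≤ i → i ≤ n → max (w i) (w' i) ≤ wmax i :=
      fun i h1 h2 => max_le (b i h1 h2) (b' i h1 h2)
    have bmin : ∀ i, 1 ≤ i → i ≤ n → min (w i) (w' i) ≤ wmax i :=
      fun i h1 h2 => min_le_of_left_le (b i h1 h2)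
    exact ⟨⟨⟨bmax, fun j h1 h2 => up_max (u j h1 h2) (u' j h1 h2)⟩,
        ⟨bmax, fun j h1 h2 => lo_max (l j h1 h2) (l' j h1 h2)⟩⟩,
      ⟨⟨bmin, fun j h1 h2 => up_min (u j h1 h2) (u' j h1 h2)⟩,
        ⟨bmin, fun j h1 h2 => lo_min (l j h1 h2) (l' j h1 h2)⟩⟩⟩
end
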